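/- Let T : M_m → M_m be a unital completely positive map that is self-adjoint with respect to Tr (so T is also trace preserving), let N be the multiplicative domain of T, and let E be the trace-preserving conditional expectation onto N. Suppose μ := ‖T∘(I − E)‖_{2→2} < 1. Then for every n ≥ 1, every density ρ ∈ M_n ⊗ M_m and every k ≥ 1: D((id_{M_n} ⊗ T)^k(ρ) ‖ M_n ⊗ N) ≤ 2 μ^k exp(D₂(ρ ‖ M_n ⊗ N)/2). Moreover, if k ≥ (log(1/μ))^{−1} (log(4/ε²) + D_{2,cb}(M_m‖N)/2) for some ε > 0, then ‖(id ⊗ T)^k(ρ) − (id ⊗ E)(ρ)‖_1 ≤ ε when k is even, and ‖(id ⊗ T)^k(ρ) − (id ⊗ (T∘E))(ρ)‖_1 ≤ ε when k is odd. -/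

import Mathlib

open scoped ENNReal Classical ComplexOrder
open Matrix

noncomputable section

namespace GJL

variable {n : Type*} [Fintype n] [DecidableEq n]

/-- `Mat n` is the matrix *-algebra with rows and columns indexed by `n`. -/
abbrev Mat (n : Type*) [Fintype n] [DecidableEq n] := Matrix n n ℂ

/-- A density matrix: positive semidefinite with trace one. -/
def IsDensity (ρ : Mat n) : Prop := ρ.PosSemidef ∧ ρ.trace = 1

/-- The real part of the (matrix) trace. -/
def traceR (A : Mat n) : ℝ := (A.trace).re

/-- Real matrix powers via the continuous functional calculus.  For positive
semidefinite matrices and negative exponents this is the generalized inverse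
power on the support, since `(0 : ℝ) ^ r = 0` for `r ≠ 0`. -/
def mpow (A : Mat n) (r : ℝ) : Mat n := cfc (fun x : ℝ => x ^ r) A

/-- Matrix logarithm on the support (`Real.log 0 = 0`). -/
def mlog (A : Mat n) : Mat n := cfc Real.log A

/-- Schatten `p`-norm `(Tr ((x* x)^(p/2)))^(1/p)`. -/
def snorm (p : ℝ) (x : Mat n) : ℝ := (traceR (mpow (xᴴ * x) (p/2))) ^ (1/p)

/-- Operator norm `‖x‖_∞`. -/
def opNorm (x : Mat n) : ℝ := ‖(Matrix.toEuclideanCLM (𝕜 := ℂ) x : EuclideanSpace ℂ n →L[ℂ] EuclideanSpace ℂ n)‖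

/-- The support projection of `ρ` is dominated by that of `σ` (for positive
semidefinite matrices: `ker σ ⊆ ker ρ`). -/
def suppLe (ρ σ : Mat n) : Prop := ∀ v, σ.mulVec v = 0 → ρ.mulVec v = 0

/-- `e` is the support projection of `ρ`. -/
def IsSupportProj (ρ e : Mat n) : Prop :=
  e.IsHermitian ∧ e * e = e ∧ ∀ v, e.mulVec v = 0 ↔ ρ.mulVec v = 0

/-- `D_∞(ρ‖σ) = log min {λ ≥ 0 | ρ ≤ λ σ}`, `⊤` if no such `λ` exists. -/
def Dinf (ρ σ : Mat n) : EReal :=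
  if ∃ c : ℝ, 0 ≤ c ∧ (c • σ - ρ).PosSemidef then
    ((Real.log (sInf {c : ℝ | 0 ≤ c ∧ (c • σ - ρ).PosSemidef}) : ℝ) : EReal)
  else ⊤

/-- Umegaki relative entropy `D(ρ‖σ) = Tr(ρ log ρ - ρ log σ)`, `⊤` if the
support condition fails. -/
def DU (ρ σ : Mat n) : EReal :=
  if suppLe ρ σ then ((traceR (ρ * mlog ρ - ρ * mlog σ) : ℝ) : EReal) else ⊤

/-- The sandwiched matrix `σ^{(1-p)/(2p)} ρ σ^{(1-p)/(2p)}`; note that for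
`p > 1` the exponent `(1-p)/(2p)` equals `-1/(2p')` with `1/p + 1/p' = 1`. -/
def sandwich (p : ℝ) (ρ σ : Mat n) : Mat n :=
  mpow σ ((1 - p)/(2*p)) * ρ * mpow σ ((1 - p)/(2*p))

/-- The sandwiched Rényi relative entropy `D_p(ρ‖σ)` for `p ∈ [1/2, ∞]`:
for `p ∈ (1,∞)` it is `p' log ‖σ^{-1/(2p')} ρ σ^{-1/(2p')}‖_p
= (p-1)⁻¹ log Tr ((σ^{-1/(2p')} ρ σ^{-1/(2p')})^p)` when the support of `ρ` is
dominated by that of `σ` and `⊤` otherwise; for `p ∈ [1/2, 1)` it is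
`(p-1)⁻¹ log Tr ((σ^{(1-p)/(2p)} ρ σ^{(1-p)/(2p)})^p)` (`⊤` when the trace
vanishes, i.e. when the honest value is `+∞`); `D_1` is the Umegaki relative
entropy and `D_∞` the max-relative entropy. -/
def Dp (p : ℝ≥0∞) (ρ σ : Mat n) : EReal :=
  if p = ⊤ then Dinf ρ σ
  else if p = 1 then DU ρ σ
  else if 1 < p.toReal ∧ ¬ suppLe ρ σ then ⊤
  else if traceR (mpow (sandwich p.toReal ρ σ) p.toReal) = 0 then ⊤
  else (((p.toReal - 1)⁻¹ * Real.log (traceR (mpow (sandwich p.toReal ρ σ) p.toReal)) : ℝ) : EReal)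

/-- `D_p(ρ‖S) = inf { D_p(ρ‖σ) | σ a density in S }`. -/
def DpSet (p : ℝ≥0∞) (ρ : Mat n) (S : Set (Mat n)) : EReal :=
  ⨅ σ ∈ {σ ∈ S | IsDensity σ}, Dp p ρ σ

/-- `D_p(A‖S) = sup { D_p(ρ‖S) | ρ a density in A }`. -/
def DpRel (p : ℝ≥0∞) (A S : Set (Mat n)) : EReal :=
  ⨆ ρ ∈ {ρ ∈ A | IsDensity ρ}, DpSet p ρ S

open scoped Kronecker in
/-- The algebraic tensor product `N₁ ⊗ N₂ ⊆ M_{n₁} ⊗ M_{n₂} = M_{n₁ × n₂}`,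
realized as the linear span of Kronecker products. -/
def tensorSpan {n₁ n₂ : Type*} [Fintype n₁] [DecidableEq n₁] [Fintype n₂] [DecidableEq n₂]
    (N₁ : Set (Mat n₁)) (N₂ : Set (Mat n₂)) : Set (Mat (n₁ × n₂)) :=
  ↑(Submodule.span ℂ {z : Mat (n₁ × n₂) | ∃ x ∈ N₁, ∃ y ∈ N₂, z = x ⊗ₖ y})

/-- `D_{p,cb}(M‖N) = sup_k D_p(M_k ⊗ M ‖ M_k ⊗ N)`. -/
def DpCb (p : ℝ≥0∞) (N : Set (Mat n)) : EReal :=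
  ⨆ k : ℕ, DpRel p Set.univ (tensorSpan (Set.univ : Set (Mat (Fin k))) N)

/-- `E` is the trace preserving conditional expectation onto `N`, i.e. the
orthogonal projection onto `N` with respect to the Hilbert–Schmidt inner
product `⟨x,y⟩ = Tr(x* y)`. -/
def IsCondExp (N : Set (Mat n)) (E : Mat n →ₗ[ℂ] Mat n) : Prop :=
  (∀ x, E x ∈ N) ∧ (∀ x ∈ N, E x = x) ∧
    ∀ x y, y ∈ N → ((E x)ᴴ * y).trace = (xᴴ * y).trace

/-- The Pimsner–Popa index constant
`λ(M:N) = max {c ≥ 0 | c x ≤ E(x) for all x ≥ 0}`. -/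
def ppIndex (E : Mat n →ₗ[ℂ] Mat n) : ℝ :=
  sSup {c : ℝ | 0 ≤ c ∧ ∀ x : Mat n, x.PosSemidef → (E x - c • x).PosSemidef}

/-- von Neumann entropy `H(ρ) = -Tr(ρ log ρ)`. -/
def vnEntropy (ρ : Mat n) : ℝ := - traceR (ρ * mlog ρ)

/-- The amplification `id_{M_k} ⊗ Φ` acting on `M_k ⊗ M_n = M_{k × n}`,
applying `Φ` blockwise. -/
def ampFun (k : Type*) [Fintype k] [DecidableEq k] (Φ : Mat n →ₗ[ℂ] Mat n)
    (X : Mat (k × n)) : Mat (k × n) :=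
  Matrix.of fun a b => Φ (Matrix.of fun s t => X (a.1, s) (b.1, t)) a.2 b.2

/-- Complete positivity: all amplifications `id_{M_k} ⊗ Φ` preserve positive
semidefiniteness. -/
def IsCP (Φ : Mat n →ₗ[ℂ] Mat n) : Prop :=
  ∀ (k : ℕ) (X : Mat (Fin k × n)), X.PosSemidef → (ampFun (Fin k) Φ X).PosSemidef

/-- Completely positive and trace preserving. -/
def IsCPTP (Φ : Mat n →ₗ[ℂ] Mat n) : Prop :=
  IsCP Φ ∧ ∀ x : Mat n, (Φ x).trace = x.trace

/-- The multiplicative domain of a unital completely positive map. -/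
def multDomain {n : Type*} [Fintype n] [DecidableEq n]
    (T : Mat n →ₗ[ℂ] Mat n) : Set (Mat n) :=
  {a | T (aᴴ * a) = (T aᴴ) * T a ∧ T (a * aᴴ) = T a * (T aᴴ)}

/-- The `2 → 2` operator norm of a linear map on `M_n`, with respect to the
Hilbert–Schmidt norm. -/
def norm22 {n : Type*} [Fintype n] [DecidableEq n]
    (Φ : Mat n →ₗ[ℂ] Mat n) : ℝ :=
  sSup {c : ℝ | ∃ x : Mat n, snorm 2 x ≤ 1 ∧ c = snorm 2 (Φ x)}

/-- squared Hilbert–Schmidt norm -/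
def hs (x : Mat n) : ℝ := ∑ i, ∑ j, ‖x i j‖ ^ 2

lemma hs_nonneg (x : Mat n) : 0 ≤ hs x := by unfold hs; positivity

lemma trace_conj_mul (x y : Mat n) : (xᴴ * y).trace = ∑ i, ∑ j, star (x i j) * y i j := by
  simp only [Matrix.trace, Matrix.diag, Matrix.mul_apply, Matrix.conjTranspose_apply]
  rw [Finset.sum_comm]

lemma traceR_conj_mul_self (x : Mat n) : traceR (xᴴ * x) = hs x := by
  unfold traceR hs
  rw [trace_conj_mul, Complex.re_sum]
  refine Finset.sum_congr rfl fun i _ => ?_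
  rw [Complex.re_sum]
  refine Finset.sum_congr rfl fun j _ => ?_
  rw [← Complex.normSq_eq_norm_sq, Complex.star_def, mul_comm, Complex.mul_conj]
  simp

lemma traceR_add (x y : Mat n) : traceR (x + y) = traceR x + traceR y := by
  simp [traceR, Matrix.trace_add]

lemma traceR_sub (x y : Mat n) : traceR (x - y) = traceR x - traceR y := by
  simp [traceR, Matrix.trace_sub]

lemma traceR_smul (c : ℝ) (x : Mat n) : traceR (c • x) = c * traceR x := by
  simp [traceR, Matrix.trace_smul]

lemma traceR_mul_comm (x y : Mat n) : traceR (x * y) = traceR (y * x) := by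
  simp [traceR, Matrix.trace_mul_comm x y]

lemma traceR_cs (x y : Mat n) : traceR (xᴴ * y) ≤ √(hs x) * √(hs y) := by
  unfold traceR hs
  rw [trace_conj_mul, Complex.re_sum]
  simp_rw [Complex.re_sum]
  simp_rw [← Finset.sum_product' (Finset.univ) (Finset.univ)]
  refine le_trans ?_ (Real.sum_mul_le_sqrt_mul_sqrt _ (fun p : n × n => ‖x p.1 p.2‖) (fun p : n × n => ‖y p.1 p.2‖))
  refine Finset.sum_le_sum fun p _ => ?_
  refine (Complex.re_le_norm _).trans ?_
  simp

lemma hs_conjTranspose (x : Mat n) : hs xᴴ = hs x := by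
  unfold hs
  rw [Finset.sum_comm]
  simp [Matrix.conjTranspose_apply]

lemma hs_mul_unitary_left (U x : Mat n) (hU : Uᴴ * U = 1) : hs (U * x) = hs x := by
  rw [← traceR_conj_mul_self, ← traceR_conj_mul_self, Matrix.conjTranspose_mul, Matrix.mul_assoc,
    ← Matrix.mul_assoc Uᴴ, hU, Matrix.one_mul]

lemma hs_mul_unitary_right (U x : Mat n) (hU : U * Uᴴ = 1) : hs (x * U) = hs x := by
  rw [← hs_conjTranspose, Matrix.conjTranspose_mul, hs_mul_unitary_left, hs_conjTranspose]
  simpa using hU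

lemma traceR_psd_nonneg {A : Mat n} (hA : A.PosSemidef) : 0 ≤ traceR A :=
  (Complex.nonneg_iff.mp hA.trace_nonneg).1

lemma traceR_psd_mul_nonneg {A B : Mat n} (hA : A.PosSemidef) (hB : B.PosSemidef) :
    0 ≤ traceR (A * B) := by
  obtain ⟨C, rfl⟩ : ∃ C : Mat n, B = Cᴴ * C := by
    open scoped MatrixOrder in
    obtain ⟨C, hC⟩ := CStarAlgebra.nonneg_iff_eq_star_mul_self.mp hB.nonneg
    exact ⟨C, hC⟩
  rw [← Matrix.mul_assoc, traceR_mul_comm, ← Matrix.mul_assoc]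
  exact traceR_psd_nonneg (hA.mul_mul_conjTranspose_same C)

lemma eig_exists {A : Mat n} (hA : A.IsHermitian) : ∃ (U : Mat n) (l : n → ℝ),
    Uᴴ * U = 1 ∧ U * Uᴴ = 1 ∧ A = U * diagonal (fun i => (l i : ℂ)) * Uᴴ ∧
    (∀ f : ℝ → ℝ, cfc f A = U * diagonal (fun i => (f (l i) : ℂ)) * Uᴴ) ∧
    (A.PosSemidef → ∀ i, 0 ≤ l i) ∧ (A.PosDef → ∀ i, 0 < l i) := by
  refine ⟨hA.eigenvectorUnitary, hA.eigenvalues, ?_, ?_, ?_, ?_, ?_, ?_⟩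
  · exact Unitary.coe_star_mul_self hA.eigenvectorUnitary
  · exact Unitary.coe_mul_star_self hA.eigenvectorUnitary
  · conv_lhs => rw [hA.spectral_theorem]
    rw [Unitary.conjStarAlgAut_apply]; rfl
  · intro f
    rw [hA.cfc_eq, Matrix.IsHermitian.cfc, Unitary.conjStarAlgAut_apply]; rfl
  · exact fun h i => h.eigenvalues_nonneg i
  · exact fun h i => h.eigenvalues_pos i

lemma conj_diag_mul {U : Mat n} (hU : Uᴴ * U = 1) (f g : n → ℂ) :
    (U * diagonal f * Uᴴ) * (U * diagonal g * Uᴴ) = U * diagonal (fun i => f i * g i) * Uᴴ := by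
  calc _ = U * diagonal f * (Uᴴ * U) * diagonal g * Uᴴ := by simp only [Matrix.mul_assoc]
    _ = _ := by rw [hU, Matrix.mul_one, Matrix.mul_assoc U, Matrix.diagonal_mul_diagonal]

lemma conj_diag_isHermitian (U : Mat n) (f : n → ℝ) :
    (U * diagonal (fun i => (f i : ℂ)) * Uᴴ).IsHermitian := by
  apply Matrix.isHermitian_mul_mul_conjTranspose
  rw [Matrix.isHermitian_diagonal_iff]
  intro i
  simp [IsSelfAdjoint]

lemma conj_diag_psd (U : Mat n) {f : n → ℝ} (hf : ∀ i, 0 ≤ f i) :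
    (U * diagonal (fun i => (f i : ℂ)) * Uᴴ).PosSemidef := by
  apply Matrix.PosSemidef.mul_mul_conjTranspose_same
  rw [Matrix.posSemidef_diagonal_iff]
  intro i
  exact_mod_cast hf i

lemma traceR_conj_diag {U : Mat n} (hU : Uᴴ * U = 1) (f : n → ℝ) :
    traceR (U * diagonal (fun i => (f i : ℂ)) * Uᴴ) = ∑ i, f i := by
  rw [traceR_mul_comm, ← Matrix.mul_assoc, hU, Matrix.one_mul]
  simp [traceR, Matrix.trace_diagonal]

lemma cfc_mem_subalg (B : Subalgebra ℂ (Mat n)) {A : Mat n} (hA : A.IsHermitian) (hAB : A ∈ B)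
    (f : ℝ → ℝ) : cfc f A ∈ B := by
  obtain ⟨U, l, hU, hU', hAe, hc, -, -⟩ := eig_exists hA
  let s : Finset ℝ := Finset.univ.image l
  let q : Polynomial ℝ := Lagrange.interpolate s id f
  have hq : ∀ i, q.eval (l i) = f (l i) := fun i =>
    Lagrange.eval_interpolate_at_node (v := id) f (Set.injOn_id _) (Finset.mem_image_of_mem l (Finset.mem_univ i))
  have : cfc f A = cfc q.eval A := by
    rw [hc, hc]; simp [hq]
  have hA' : IsSelfAdjoint A := hA
  rw [this, cfc_polynomial q A hA']
  have h2 : A ∈ B.restrictScalars ℝ := hAB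
  have := Algebra.adjoin_le (S := B.restrictScalars ℝ) (s := {A}) (by simpa using h2)
  exact this (Polynomial.aeval_mem_adjoin_singleton ℝ A)

lemma log_compare {ι κ : Type*} [Fintype ι] [Fintype κ] (N y : ι → ℝ) (w p c : κ → ℝ)
    (hy : ∀ i, 0 ≤ y i) (hNy : ∀ i, y i = 0 → N i = 0)
    (hp : ∀ j, 0 ≤ p j) (hc : ∀ j, 0 < c j)
    (hsum : ∑ i, N i = ∑ j, w j * p j)
    (hres : ∀ t : ℝ, 0 < t → ∑ j, w j * (p j ^ 2 / (c j + t * p j)) ≤ ∑ i, N i * (y i / (1 + t * y i))) :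
    - ∑ j, w j * p j * Real.log (c j) ≤
      ∑ i, N i * Real.log (y i) - ∑ j, w j * p j * Real.log (p j) := by
  let g : ℝ → ℝ := fun t => ∑ i, N i * Real.log (1 + t * y i) - ∑ j, w j * p j * Real.log (c j + t * p j)
  have pos1 : ∀ i (t : ℝ), 0 ≤ t → 0 < 1 + t * y i := fun i t ht => by
    have := mul_nonneg ht (hy i); linarith
  have pos2 : ∀ j (t : ℝ), 0 ≤ t → 0 < c j + t * p j := fun j t ht => by
    have := mul_nonneg ht (hp j); have := hc j; linarith
  have hder : ∀ t : ℝ, 0 ≤ t → HasDerivAt g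
      (∑ i, N i * (y i / (1 + t * y i)) - ∑ j, w j * (p j ^ 2 / (c j + t * p j))) t := by
    intro t ht
    apply HasDerivAt.sub
    · apply HasDerivAt.fun_sum
      intro i _
      apply HasDerivAt.const_mul
      have h : HasDerivAt (fun s : ℝ => 1 + s * y i) (y i) t := by
        simpa using ((hasDerivAt_id t).mul_const (y i)).const_add 1
      exact h.log (pos1 i t ht).ne'
    · apply HasDerivAt.fun_sum
      intro j _
      have : w j * (p j ^ 2 / (c j + t * p j)) = w j * p j * (p j / (c j + t * p j)) := by ring
      rw [this]
      apply HasDerivAt.const_mul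
      have h : HasDerivAt (fun s : ℝ => c j + s * p j) (p j) t := by
        simpa using ((hasDerivAt_id t).mul_const (p j)).const_add (c j)
      exact h.log (pos2 j t ht).ne'
  have hmono : MonotoneOn g (Set.Ici 0) := by
    apply monotoneOn_of_deriv_nonneg (convex_Ici 0)
    · exact fun t ht => (hder t ht).continuousAt.continuousWithinAt
    · rw [interior_Ici]
      exact fun t ht => (hder t (le_of_lt ht)).differentiableAt.differentiableWithinAt
    · rw [interior_Ici]
      intro t ht
      rw [(hder t (le_of_lt ht)).deriv]
      have := hres t ht
      linarith
  have hlim : Filter.Tendsto (fun t : ℝ => ∑ i, N i * Real.log (y i + t⁻¹) -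
      ∑ j, w j * p j * Real.log (p j + c j * t⁻¹)) Filter.atTop
      (nhds (∑ i, N i * Real.log (y i) - ∑ j, w j * p j * Real.log (p j))) := by
    have hi : Filter.Tendsto (fun t : ℝ => t⁻¹) Filter.atTop (nhds 0) := tendsto_inv_atTop_zero
    apply Filter.Tendsto.sub
    · apply tendsto_finsetSum
      intro i _
      rcases (hy i).eq_or_lt with h | h
      · simp [hNy i h.symm]
      · apply Filter.Tendsto.const_mul
        apply Filter.Tendsto.log _ h.ne'
        simpa using hi.const_add (y i)
    · apply tendsto_finsetSum
      intro j _
      rcases (hp j).eq_or_lt with h | h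
      · simp [← h]
      · apply Filter.Tendsto.const_mul
        apply Filter.Tendsto.log _ h.ne'
        simpa using (hi.const_mul (c j)).const_add (p j)
  have h0 : g 0 = - ∑ j, w j * p j * Real.log (c j) := by simp [g]
  rw [← h0]
  refine ge_of_tendsto hlim ?_
  filter_upwards [Filter.eventually_gt_atTop (0:ℝ)] with t ht
  refine (hmono (Set.mem_Ici.mpr le_rfl) (Set.mem_Ici.mpr ht.le) ht.le).trans (le_of_eq ?_)
  have e1 : ∀ i, N i * Real.log (1 + t * y i) = N i * Real.log t + N i * Real.log (y i + t⁻¹) := by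
    intro i
    have : 1 + t * y i = t * (y i + t⁻¹) := by field_simp; ring
    rw [this, Real.log_mul ht.ne' (by have := hy i; positivity)]; ring
  have e2 : ∀ j, w j * p j * Real.log (c j + t * p j) = w j * p j * Real.log t + w j * p j * Real.log (p j + c j * t⁻¹) := by
    intro j
    have : c j + t * p j = t * (p j + c j * t⁻¹) := by field_simp; ring
    rw [this, Real.log_mul ht.ne' (by have := hp j; have := hc j; positivity)]; ring
  simp only [g, e1, e2, Finset.sum_add_distrib, ← Finset.sum_mul, hsum]
  ring

lemma traceR_conj_diag_mul (X : Mat n) (d : n → ℝ) :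
    traceR (Xᴴ * diagonal (fun i => (d i : ℂ)) * X) = ∑ i, ∑ j, d i * ‖X i j‖ ^ 2 := by
  unfold traceR
  rw [Matrix.mul_assoc, trace_conj_mul, Complex.re_sum]
  refine Finset.sum_congr rfl fun i _ => ?_
  rw [Complex.re_sum]
  refine Finset.sum_congr rfl fun j _ => ?_
  rw [Matrix.diagonal_mul, ← Complex.normSq_eq_norm_sq]
  have : star (X i j) * ((d i : ℂ) * X i j) = (d i : ℂ) * (X i j * (starRingEnd ℂ) (X i j)) := by
    rw [Complex.star_def]; ring
  rw [this, Complex.mul_conj, ← Complex.ofReal_mul, Complex.ofReal_re]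

/-- scalar resolvent estimate -/
lemma scalar_res (P R Q : ℂ) (y t : ℝ) (hy : 0 < y) (ht : 0 < t) :
    2 * ((t * y / (1 + t * y)) * (star R * Q).re + (1 / (1 + t * y)) * (star P * R).re) ≤
      y⁻¹ * ‖P‖ ^ 2 + t * ‖Q‖ ^ 2 + ‖R‖ ^ 2 * (y / (1 + t * y)) := by
  have h1 : (star R * Q).re ≤ ‖R‖ * ‖Q‖ := (Complex.re_le_norm _).trans (by simp)
  have h2 : (star P * R).re ≤ ‖P‖ * ‖R‖ := (Complex.re_le_norm _).trans (by simp)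
  have hs : 0 < 1 + t * y := by positivity
  have h3 : (t * y / (1 + t * y)) * (star R * Q).re ≤ (t * y / (1 + t * y)) * (‖R‖ * ‖Q‖) := by gcongr
  have h4 : (1 / (1 + t * y)) * (star P * R).re ≤ (1 / (1 + t * y)) * (‖P‖ * ‖R‖) := by gcongr
  have h5 : y⁻¹ * ‖P‖ ^ 2 + t * ‖Q‖ ^ 2 + ‖R‖ ^ 2 * (y / (1 + t * y)) -
      2 * ((t * y / (1 + t * y)) * (‖R‖ * ‖Q‖) + (1 / (1 + t * y)) * (‖P‖ * ‖R‖)) =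
      y⁻¹ * (‖P‖ - y / (1 + t * y) * ‖R‖) ^ 2 + t * (‖Q‖ - y / (1 + t * y) * ‖R‖) ^ 2 := by
    field_simp; ring
  have h6 : 0 ≤ y⁻¹ * (‖P‖ - y / (1 + t * y) * ‖R‖) ^ 2 + t * (‖Q‖ - y / (1 + t * y) * ‖R‖) ^ 2 := by
    positivity
  linarith

/-- resolvent inequality behind `D ≤ D_BS` -/
lemma resolvent_ineq (p c y : n → ℝ) (M R : Mat n) (hp : ∀ a, 0 ≤ p a) (hc : ∀ b, 0 < c b)
    (hy : ∀ i, 0 ≤ y i) (hM : Mᴴ * M = 1) (hM' : M * Mᴴ = 1)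
    (hR : R * Rᴴ = diagonal (fun a => (p a : ℂ)))
    (hRy : Rᴴ * (M * diagonal (fun b => (((c b)⁻¹ : ℝ) : ℂ)) * Mᴴ) * R = diagonal (fun i => (y i : ℂ)))
    (hR0 : ∀ i, y i = 0 → ∀ a, R a i = 0)
    (t : ℝ) (ht : 0 < t) :
    ∑ a, ∑ b, ‖M a b‖ ^ 2 * (p a ^ 2 / (c b + t * p a)) ≤
      ∑ i, (∑ a, ‖R a i‖ ^ 2) * (y i / (1 + t * y i)) := by
  have pos2 : ∀ a b, 0 < c b + t * p a := fun a b => by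
    have := mul_nonneg ht.le (hp a); have := hc b; linarith
  let κ : Mat n := Matrix.of fun b a => star (M a b) * ((p a / (c b + t * p a) : ℝ) : ℂ)
  let K : Mat n := M * κ
  let L : ℝ := ∑ a, ∑ b, ‖M a b‖ ^ 2 * (p a ^ 2 / (c b + t * p a))
  let g : Mat n := M * diagonal (fun b => (((c b)⁻¹ : ℝ) : ℂ)) * Mᴴ
  let A : Mat n := M * diagonal (fun b => (c b : ℂ)) * Mᴴ
  let Z : Mat n := R * diagonal (fun i => (((y i)⁻¹ : ℝ) : ℂ)) * Rᴴ
  let P : Mat n := Kᴴ * R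
  let Q : Mat n := K * R
  have hκ : ∀ b a, ‖κ b a‖ ^ 2 = ‖M a b‖ ^ 2 * (p a / (c b + t * p a)) ^ 2 := by
    intro b a
    simp only [κ, Matrix.of_apply, norm_mul, norm_star, Complex.norm_real, mul_pow, Real.norm_eq_abs, sq_abs]
  -- Tr (ω K) = L
  have h1 : traceR (diagonal (fun a => (p a : ℂ)) * K) = L := by
    have key : ∀ a, (diagonal (fun a => (p a : ℂ)) * K) a a = (p a : ℂ) * ∑ b, M a b * κ b a := by
      intro a
      rw [Matrix.diagonal_mul]; simp only [K, Matrix.mul_apply]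
    unfold traceR Matrix.trace
    simp only [Matrix.diag_apply, key, Complex.re_sum, L]
    refine Finset.sum_congr rfl fun a _ => ?_
    rw [Finset.mul_sum, Complex.re_sum]
    refine Finset.sum_congr rfl fun b _ => ?_
    simp only [κ, Matrix.of_apply]
    have : (p a : ℂ) * (M a b * (star (M a b) * ((p a / (c b + t * p a) : ℝ) : ℂ))) =
        (p a : ℂ) * ((M a b * (starRingEnd ℂ) (M a b)) * ((p a / (c b + t * p a) : ℝ) : ℂ)) := by
      rw [Complex.star_def]; ring
    rw [this, Complex.mul_conj, ← Complex.ofReal_mul, ← Complex.ofReal_mul, Complex.ofReal_re,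
      Complex.normSq_eq_norm_sq]
    ring
  -- Tr (K* A K) + t Tr (K ω K*) = L
  have hAg : A * g = 1 := by
    simp only [A, g]
    rw [conj_diag_mul hM]
    have : (fun i => (c i : ℂ) * (((c i)⁻¹ : ℝ) : ℂ)) = fun _ => 1 := by
      funext i
      rw [← Complex.ofReal_mul, mul_inv_cancel₀ (hc i).ne', Complex.ofReal_one]
    rw [this, Matrix.diagonal_one, Matrix.mul_one, hM']
  have hgA : g * A = 1 := by rw [mul_eq_one_comm]; exact hAg
  have h2 : traceR (Kᴴ * A * K) = ∑ b, ∑ a, c b * (‖M a b‖ ^ 2 * (p a / (c b + t * p a)) ^ 2) := by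
    have : Kᴴ * A * K = κᴴ * diagonal (fun b => (c b : ℂ)) * κ := by
      calc Kᴴ * A * K = κᴴ * (Mᴴ * M) * diagonal (fun b => (c b : ℂ)) * (Mᴴ * M) * κ := by
            simp only [K, A, Matrix.conjTranspose_mul, Matrix.mul_assoc]
        _ = _ := by rw [hM, Matrix.mul_one, Matrix.mul_one]
    rw [this, traceR_conj_diag_mul]
    simp_rw [hκ]
  have h3 : hs Q = ∑ b, ∑ a, p a * (‖M a b‖ ^ 2 * (p a / (c b + t * p a)) ^ 2) := by
    rw [← traceR_conj_mul_self]
    have : traceR (Qᴴ * Q) = traceR ((κᴴ)ᴴ * diagonal (fun a => (p a : ℂ)) * κᴴ) := by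
      rw [← hR]
      calc traceR (Qᴴ * Q) = traceR (Rᴴ * (κᴴ * (Mᴴ * M) * κ * R)) := by
            simp only [Q, K, Matrix.conjTranspose_mul, Matrix.mul_assoc]
        _ = traceR (κᴴ * (κ * R * Rᴴ)) := by
            rw [hM, Matrix.mul_one, traceR_mul_comm]; simp only [Matrix.mul_assoc]
        _ = _ := by
            rw [traceR_mul_comm]; simp only [Matrix.conjTranspose_conjTranspose, Matrix.mul_assoc]
    rw [this, traceR_conj_diag_mul, Finset.sum_comm]
    simp only [Matrix.conjTranspose_apply, norm_star, hκ]
  have h23 : traceR (Kᴴ * A * K) + t * hs Q = L := by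
    rw [h2, h3, Finset.mul_sum, ← Finset.sum_add_distrib]
    simp only [L]
    rw [Finset.sum_comm (s := (Finset.univ : Finset n))]
    refine Finset.sum_congr rfl fun b _ => ?_
    rw [Finset.mul_sum, ← Finset.sum_add_distrib]
    refine Finset.sum_congr rfl fun a _ => ?_
    have := (pos2 a b).ne'
    field_simp
  -- Z ≤ A
  have hgH : gᴴ = g := (conj_diag_isHermitian M (fun b => (c b)⁻¹)).eq
  have hAH : Aᴴ = A := (conj_diag_isHermitian M c).eq
  have hZH : Zᴴ = Z := (conj_diag_isHermitian R (fun i => (y i)⁻¹)).eq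
  have hZgZ : Z * g * Z = Z := by
    calc Z * g * Z = R * (diagonal (fun i => (((y i)⁻¹ : ℝ) : ℂ)) * (Rᴴ * g * R) *
          diagonal (fun i => (((y i)⁻¹ : ℝ) : ℂ))) * Rᴴ := by simp only [Z, Matrix.mul_assoc]
      _ = Z := by
        rw [hRy, Matrix.diagonal_mul_diagonal, Matrix.diagonal_mul_diagonal]
        have : (fun i => (((y i)⁻¹ : ℝ) : ℂ) * (y i : ℂ) * (((y i)⁻¹ : ℝ) : ℂ)) = fun i => (((y i)⁻¹ : ℝ) : ℂ) := by
          funext i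
          rw [← Complex.ofReal_mul, ← Complex.ofReal_mul]
          congr 1
          by_cases h : y i = 0
          · simp [h]
          · field_simp
        rw [this]
  have hAZ : (A - Z).PosSemidef := by
    have e : A - Z = (A - Z)ᴴ * g * (A - Z) := by
      rw [Matrix.conjTranspose_sub, hAH, hZH]
      calc A - Z = A - Z - Z + Z * g * Z := by rw [hZgZ]; abel
        _ = (A * g) * A - (A * g) * Z - Z * (g * A) + Z * g * Z := by
          rw [hAg, hgA]; simp
        _ = _ := by noncomm_ring
    rw [e]
    exact (conj_diag_psd M (fun b => (inv_pos.mpr (hc b)).le)).conjTranspose_mul_mul_same _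
  have h4 : ∑ i, ∑ j, (y i)⁻¹ * ‖P j i‖ ^ 2 ≤ traceR (Kᴴ * A * K) := by
    have e : traceR (Kᴴ * Z * K) = ∑ i, ∑ j, (y i)⁻¹ * ‖P j i‖ ^ 2 := by
      have : Kᴴ * Z * K = (Pᴴ)ᴴ * diagonal (fun i => (((y i)⁻¹ : ℝ) : ℂ)) * Pᴴ := by
        simp only [P, Z, Matrix.conjTranspose_mul, Matrix.conjTranspose_conjTranspose, Matrix.mul_assoc]
      rw [this, traceR_conj_diag_mul]
      simp only [Matrix.conjTranspose_apply, norm_star]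
    rw [← e]
    have := traceR_psd_nonneg (hAZ.conjTranspose_mul_mul_same K)
    rw [Matrix.mul_sub, Matrix.sub_mul, traceR_sub] at this
    linarith
  -- the estimate
  have d1 : ∀ i, (Rᴴ * K * R) i i = ∑ j, star (R j i) * Q j i := fun i => by
    rw [Matrix.mul_assoc, Matrix.mul_apply]; rfl
  have d2 : ∀ i, (Rᴴ * K * R) i i = ∑ j, star (P j i) * R j i := fun i => by
    have : Rᴴ * K * R = Pᴴ * R := by
      simp only [P, Matrix.conjTranspose_mul, Matrix.conjTranspose_conjTranspose]
    rw [this, Matrix.mul_apply]; rfl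
  have h5 : L = ∑ i, ((Rᴴ * K * R) i i).re := by
    rw [← h1, ← hR, Matrix.mul_assoc, traceR_mul_comm, ← Complex.re_sum, Matrix.mul_assoc, Matrix.mul_assoc]
    unfold traceR Matrix.trace
    simp only [Matrix.diag]
  have h6 : ∀ i, 2 * ((Rᴴ * K * R) i i).re ≤ ∑ j, (y i)⁻¹ * ‖P j i‖ ^ 2 + t * ∑ j, ‖Q j i‖ ^ 2 +
      (∑ j, ‖R j i‖ ^ 2) * (y i / (1 + t * y i)) := by
    intro i
    rcases (hy i).eq_or_lt with h | h
    · have hz := hR0 i h.symm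
      rw [d1]
      simp only [hz]
      simp only [← h]
      simp
      positivity
    · have hs : 0 < 1 + t * y i := by positivity
      have e : ((Rᴴ * K * R) i i).re = (t * y i / (1 + t * y i)) * ((Rᴴ * K * R) i i).re +
          (1 / (1 + t * y i)) * ((Rᴴ * K * R) i i).re := by field_simp; ring
      have e' : ((Rᴴ * K * R) i i).re = ∑ j, ((t * y i / (1 + t * y i)) * (star (R j i) * Q j i).re +
          (1 / (1 + t * y i)) * (star (P j i) * R j i).re) := by
        rw [e]
        conv_lhs => rw [d1]
        conv_lhs => arg 2; rw [← d1, d2]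
        rw [Complex.re_sum, Complex.re_sum, Finset.mul_sum, Finset.mul_sum, ← Finset.sum_add_distrib]
      rw [e', Finset.mul_sum, Finset.mul_sum, Finset.sum_mul, ← Finset.sum_add_distrib,
        ← Finset.sum_add_distrib]
      exact Finset.sum_le_sum fun j _ => scalar_res _ _ _ _ _ h ht
  have h7 : 2 * L ≤ ∑ i, ∑ j, (y i)⁻¹ * ‖P j i‖ ^ 2 + t * hs Q +
      ∑ i, (∑ j, ‖R j i‖ ^ 2) * (y i / (1 + t * y i)) := by
    have e : hs Q = ∑ i, ∑ j, ‖Q j i‖ ^ 2 := by unfold hs; rw [Finset.sum_comm]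
    rw [h5, e, Finset.mul_sum, Finset.mul_sum, ← Finset.sum_add_distrib, ← Finset.sum_add_distrib]
    exact Finset.sum_le_sum fun i _ => h6 i
  have : L ≤ ∑ i, (∑ j, ‖R j i‖ ^ 2) * (y i / (1 + t * y i)) := by linarith
  exact this

lemma unitary_row_sum {M : Mat n} (hM' : M * Mᴴ = 1) (a : n) : ∑ b, ‖M a b‖ ^ 2 = 1 := by
  have h := congrFun (congrFun hM' a) a
  rw [Matrix.mul_apply, Matrix.one_apply_eq] at h
  have h2 := congrArg Complex.re h
  rw [Complex.re_sum, Complex.one_re] at h2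
  rw [← h2]
  refine Finset.sum_congr rfl fun b _ => ?_
  rw [Matrix.conjTranspose_apply, Complex.star_def, Complex.mul_conj, Complex.ofReal_re,
    Complex.normSq_eq_norm_sq]

lemma unitary_col_sum {M : Mat n} (hM : Mᴴ * M = 1) (b : n) : ∑ a, ‖M a b‖ ^ 2 = 1 := by
  have := unitary_row_sum (M := Mᴴ) (by simpa using hM) b
  simpa [Matrix.conjTranspose_apply] using this

lemma klein_diag (p r : n → ℝ) (M : Mat n) (hp : ∀ a, 0 ≤ p a) (hr : ∀ b, 0 < r b)
    (hM : Mᴴ * M = 1) (hM' : M * Mᴴ = 1) (g : Mat n)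
    (hg : g = M * diagonal (fun b => (((√(r b))⁻¹ : ℝ) : ℂ)) * Mᴴ) :
    ∑ a, p a * Real.log (p a) - ∑ a, ∑ b, ‖M a b‖ ^ 2 * p a * Real.log (r b) ≤
      traceR (diagonal (fun a => (p a : ℂ)) * g * diagonal (fun a => (p a : ℂ)) * g) - ∑ a, p a := by
  let S : Mat n := diagonal (fun a => ((√(p a) : ℝ) : ℂ))
  have hSS : S * S = diagonal (fun a => (p a : ℂ)) := by
    simp only [S, Matrix.diagonal_mul_diagonal]
    congr 1; funext a
    rw [← Complex.ofReal_mul, Real.mul_self_sqrt (hp a)]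
  have hSH : Sᴴ = S := by
    simp only [S, Matrix.diagonal_conjTranspose]
    congr 1; funext a
    simp
  have hgpsd : g.PosSemidef := by
    rw [hg]; exact conj_diag_psd M (fun b => by positivity)
  have hYpsd : (S * g * S).PosSemidef := by
    have := hgpsd.mul_mul_conjTranspose_same S
    rwa [hSH] at this
  obtain ⟨X, y, hX, hX', hYe, -, hy, -⟩ := eig_exists hYpsd.1
  replace hy := hy hYpsd
  let R : Mat n := S * X
  have hR : R * Rᴴ = diagonal (fun a => (p a : ℂ)) := by
    calc R * Rᴴ = S * (X * Xᴴ) * S := by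
          simp only [R, Matrix.conjTranspose_mul, hSH, Matrix.mul_assoc]
      _ = _ := by rw [hX', Matrix.mul_one, hSS]
  have hRy : Rᴴ * g * R = diagonal (fun i => (y i : ℂ)) := by
    calc Rᴴ * g * R = Xᴴ * (S * g * S) * X := by
          simp only [R, Matrix.conjTranspose_mul, hSH, Matrix.mul_assoc]
      _ = (Xᴴ * X) * diagonal (fun i => (y i : ℂ)) * (Xᴴ * X) := by
          rw [hYe]; simp only [Matrix.mul_assoc]
      _ = _ := by rw [hX, Matrix.mul_one, Matrix.one_mul]
  have hc : ∀ b, 0 < √(r b) := fun b => Real.sqrt_pos.mpr (hr b)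
  have hR0 : ∀ i, y i = 0 → ∀ a, R a i = 0 := by
    intro i hi
    let F : Mat n := Mᴴ * R
    have e : Fᴴ * diagonal (fun b => (((√(r b))⁻¹ : ℝ) : ℂ)) * F = diagonal (fun i => (y i : ℂ)) := by
      rw [← hRy, hg]
      simp only [F, Matrix.conjTranspose_mul, Matrix.conjTranspose_conjTranspose, Matrix.mul_assoc]
    have e2 : (Fᴴ * diagonal (fun b => (((√(r b))⁻¹ : ℝ) : ℂ)) * F) i i =
        ((∑ b, (√(r b))⁻¹ * ‖F b i‖ ^ 2 : ℝ) : ℂ) := by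
      rw [Matrix.mul_assoc, Matrix.mul_apply, Complex.ofReal_sum]
      refine Finset.sum_congr rfl fun b _ => ?_
      rw [Matrix.diagonal_mul, Matrix.conjTranspose_apply, Complex.star_def, mul_left_comm, mul_comm _ (F b i),
        Complex.mul_conj, Complex.normSq_eq_norm_sq]
      push_cast; ring
    rw [e, Matrix.diagonal_apply_eq, hi] at e2
    have e3 : ∑ b, (√(r b))⁻¹ * ‖F b i‖ ^ 2 = 0 := by exact_mod_cast e2.symm
    rw [Finset.sum_eq_zero_iff_of_nonneg (fun b _ => by positivity)] at e3
    have e4 : ∀ b, F b i = 0 := fun b => by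
      have := e3 b (Finset.mem_univ b)
      have h2 := (inv_pos.mpr (hc b)).ne'
      simpa [h2] using this
    intro a
    have : R = M * F := by simp only [F]; rw [← Matrix.mul_assoc, hM', Matrix.one_mul]
    rw [this, Matrix.mul_apply]
    simp [e4]
  have hRX : ∀ a i, ‖R a i‖ ^ 2 = p a * ‖X a i‖ ^ 2 := by
    intro a i
    simp only [R, S, Matrix.diagonal_mul, norm_mul, Complex.norm_real, mul_pow, Real.norm_eq_abs, sq_abs,
      Real.sq_sqrt (hp a)]
  have hNsum : ∑ i, ∑ a, ‖R a i‖ ^ 2 = ∑ a, p a := by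
    rw [Finset.sum_comm]
    refine Finset.sum_congr rfl fun a _ => ?_
    simp_rw [hRX, ← Finset.mul_sum, unitary_row_sum hX', mul_one]
  have hWsum : ∀ f : n → ℝ, ∑ x : n × n, ‖M x.1 x.2‖ ^ 2 * p x.1 * f x.1 = ∑ a, p a * f a := by
    intro f
    rw [Fintype.sum_prod_type]
    refine Finset.sum_congr rfl fun a _ => ?_
    simp_rw [mul_assoc, ← Finset.sum_mul, unitary_row_sum hM', one_mul]
  have hBS := log_compare (fun i => ∑ a, ‖R a i‖ ^ 2) y (fun x : n × n => ‖M x.1 x.2‖ ^ 2)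
    (fun x => p x.1) (fun x => √(r x.2)) hy
    (fun i hi => by simp [hR0 i hi]) (fun x => hp x.1) (fun x => hc x.2)
    (by rw [hNsum]; simpa using (hWsum (fun _ => 1)).symm)
    (fun t ht => by
      rw [Fintype.sum_prod_type]
      exact resolvent_ineq p _ y M R hp hc hy hM hM' hR (by rw [← hg]; exact hRy) hR0 t ht)
  rw [hWsum (fun a => Real.log (p a)), Fintype.sum_prod_type] at hBS
  simp only at hBS
  have hlog : ∀ b, Real.log (r b) = 2 * Real.log (√(r b)) := fun b => by
    rw [Real.log_sqrt (hr b).le]; ring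
  have e1 : ∑ a, ∑ b, ‖M a b‖ ^ 2 * p a * Real.log (r b) =
      2 * ∑ a, ∑ b, ‖M a b‖ ^ 2 * p a * Real.log (√(r b)) := by
    simp_rw [hlog, Finset.mul_sum]
    refine Finset.sum_congr rfl fun a _ => Finset.sum_congr rfl fun b _ => by ring
  have e2 : traceR (diagonal (fun a => (p a : ℂ)) * g * diagonal (fun a => (p a : ℂ)) * g) = ∑ i, y i ^ 2 := by
    have : traceR (diagonal (fun a => (p a : ℂ)) * g * diagonal (fun a => (p a : ℂ)) * g) =
        traceR ((S * g * S) * (S * g * S)) := by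
      rw [← hSS]
      calc _ = traceR (S * (S * g * S * S * g)) := by simp only [Matrix.mul_assoc]
        _ = _ := by rw [traceR_mul_comm]; simp only [Matrix.mul_assoc]
    rw [this, hYe, conj_diag_mul hX]
    have h := traceR_conj_diag hX (fun i => y i * y i)
    push_cast at h
    rw [h]
    exact Finset.sum_congr rfl fun i _ => by ring
  have hK : 2 * ∑ i, (∑ a, ‖R a i‖ ^ 2) * Real.log (y i) - ∑ a, p a * Real.log (p a) ≤
      ∑ i, y i ^ 2 - ∑ a, p a := by
    have s1 : ∑ a, p a * Real.log (p a) = ∑ i, ∑ a, ‖X a i‖ ^ 2 * (p a * Real.log (p a)) := by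
      rw [Finset.sum_comm]
      simp_rw [← Finset.sum_mul, unitary_row_sum hX', one_mul]
    have s2 : ∑ a, p a = ∑ i, ∑ a, ‖X a i‖ ^ 2 * p a := by
      rw [Finset.sum_comm]
      simp_rw [← Finset.sum_mul, unitary_row_sum hX', one_mul]
    have s3 : ∑ i, y i ^ 2 = ∑ i, ∑ a, ‖X a i‖ ^ 2 * y i ^ 2 := by
      simp_rw [← Finset.sum_mul, unitary_col_sum hX, one_mul]
    rw [s1, s2, s3, Finset.mul_sum, ← Finset.sum_sub_distrib, ← Finset.sum_sub_distrib]
    refine Finset.sum_le_sum fun i _ => ?_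
    rw [Finset.sum_mul, Finset.mul_sum, ← Finset.sum_sub_distrib, ← Finset.sum_sub_distrib]
    refine Finset.sum_le_sum fun a _ => ?_
    rw [hRX]
    rcases (hp a).eq_or_lt with h | h
    · rw [← h]; simp; positivity
    · rcases (hy i).eq_or_lt with h' | h'
      · have := hRX a i
        rw [hR0 i h'.symm a] at this
        simp only [norm_zero, ne_eq, OfNat.ofNat_ne_zero, not_false_eq_true, zero_pow] at this
        have h3 : ‖X a i‖ ^ 2 = 0 := by
          rcases mul_eq_zero.mp this.symm with h4 | h4
          · exact absurd h4 h.ne'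
          · exact h4
        rw [h3]; simp
      · have k : 2 * Real.log (y i) - Real.log (p a) ≤ y i ^ 2 / p a - 1 := by
          have := Real.log_le_sub_one_of_pos (show 0 < y i ^ 2 / p a by positivity)
          rwa [Real.log_div (by positivity) h.ne', Real.log_pow] at this
        have k2 : p a * (2 * Real.log (y i) - Real.log (p a)) ≤ y i ^ 2 - p a := by
          calc _ ≤ p a * (y i ^ 2 / p a - 1) := by gcongr
            _ = _ := by field_simp
        have k3 := mul_le_mul_of_nonneg_left k2 (sq_nonneg ‖X a i‖)
        calc _ = ‖X a i‖ ^ 2 * (p a * (2 * Real.log (y i) - Real.log (p a))) := by ring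
          _ ≤ _ := k3
          _ = _ := by ring
  rw [e1, e2]
  linarith

/-- `D(ω‖ξ) ≤ Q - 1` with scaling -/
lemma DU_le {ω ξ : Mat n} (hω : ω.PosSemidef) (hξ : ξ.PosDef) {z : ℝ} (hz : 0 < z) :
    traceR (ω * mlog ω - ω * mlog ξ) ≤ Real.log z * traceR ω +
      traceR (ω * cfc (fun x : ℝ => (√(z * x))⁻¹) ξ * ω * cfc (fun x : ℝ => (√(z * x))⁻¹) ξ) - traceR ω := by
  obtain ⟨U, p, hU, hU', hωe, hωc, hp, -⟩ := eig_exists hω.1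
  obtain ⟨V, r, hV, hV', hξe, hξc, -, hr⟩ := eig_exists hξ.1
  replace hp := hp hω
  replace hr := hr hξ
  let M : Mat n := Uᴴ * V
  have hM : Mᴴ * M = 1 := by
    calc _ = Vᴴ * (U * Uᴴ) * V := by simp only [M, Matrix.conjTranspose_mul, Matrix.conjTranspose_conjTranspose, Matrix.mul_assoc]
      _ = 1 := by rw [hU', Matrix.mul_one, hV]
  have hM' : M * Mᴴ = 1 := mul_eq_one_comm.mp hM
  have hVM : V = U * M := by simp only [M]; rw [← Matrix.mul_assoc, hU', Matrix.one_mul]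
  have key := klein_diag p (fun b => z * r b) M hp (fun b => mul_pos hz (hr b)) hM hM' _ rfl
  have hG := hξc (fun x : ℝ => (√(z * x))⁻¹)
  set g := M * diagonal (fun b => (((√(z * r b))⁻¹ : ℝ) : ℂ)) * Mᴴ with hg
  have hG2 : cfc (fun x : ℝ => (√(z * x))⁻¹) ξ = U * g * Uᴴ := by
    rw [hG, hVM, hg]; simp only [Matrix.conjTranspose_mul, Matrix.mul_assoc]
  have cj : ∀ x y : Mat n, (U * x * Uᴴ) * (U * y * Uᴴ) = U * (x * y) * Uᴴ := fun x y => by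
    calc _ = U * x * (Uᴴ * U) * y * Uᴴ := by simp only [Matrix.mul_assoc]
      _ = _ := by rw [hU, Matrix.mul_one]; simp only [Matrix.mul_assoc]
  have ct : ∀ x : Mat n, traceR (U * x * Uᴴ) = traceR x := fun x => by
    rw [traceR_mul_comm, ← Matrix.mul_assoc, hU, Matrix.one_mul]
  have t1 : traceR ω = ∑ a, p a := by rw [hωe]; exact traceR_conj_diag hU p
  have t2 : traceR (ω * mlog ω) = ∑ a, p a * Real.log (p a) := by
    have h := traceR_conj_diag hU (fun a => p a * Real.log (p a))
    push_cast at h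
    unfold mlog
    rw [← h, hωc]
    conv_lhs => rw [hωe]
    rw [conj_diag_mul hU]
  have t3 : traceR (ω * mlog ξ) = ∑ a, ∑ b, ‖M a b‖ ^ 2 * p a * Real.log (r b) := by
    have : mlog ξ = U * (M * diagonal (fun b => ((Real.log (r b) : ℝ) : ℂ)) * Mᴴ) * Uᴴ := by
      unfold mlog
      rw [hξc, hVM]; simp only [Matrix.conjTranspose_mul, Matrix.mul_assoc]
    rw [this, hωe, cj, ct, traceR_mul_comm]
    unfold traceR Matrix.trace
    rw [Complex.re_sum]
    refine Finset.sum_congr rfl fun a _ => ?_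
    rw [Matrix.diag_apply, Matrix.mul_diagonal, Matrix.mul_apply, Finset.sum_mul, Complex.re_sum]
    refine Finset.sum_congr rfl fun b _ => ?_
    rw [Matrix.mul_diagonal, Matrix.conjTranspose_apply, Complex.star_def]
    have : M a b * ((Real.log (r b) : ℝ) : ℂ) * (starRingEnd ℂ) (M a b) * (p a : ℂ) =
      (M a b * (starRingEnd ℂ) (M a b)) * ((Real.log (r b) : ℝ) : ℂ) * (p a : ℂ) := by ring
    rw [this, Complex.mul_conj, ← Complex.ofReal_mul, ← Complex.ofReal_mul, Complex.ofReal_re,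
      Complex.normSq_eq_norm_sq]
    ring
  have t4 : traceR (ω * cfc (fun x : ℝ => (√(z * x))⁻¹) ξ * ω * cfc (fun x : ℝ => (√(z * x))⁻¹) ξ) =
      traceR (diagonal (fun a => (p a : ℂ)) * g * diagonal (fun a => (p a : ℂ)) * g) := by
    rw [hG2, hωe, cj, cj, cj, ct]
  have t5 : ∑ a, ∑ b, ‖M a b‖ ^ 2 * p a * Real.log (z * r b) = Real.log z * ∑ a, p a +
      ∑ a, ∑ b, ‖M a b‖ ^ 2 * p a * Real.log (r b) := by
    simp_rw [fun b => Real.log_mul hz.ne' (hr b).ne', mul_add, Finset.sum_add_distrib]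
    congr 1
    rw [Finset.mul_sum]
    refine Finset.sum_congr rfl fun a _ => ?_
    simp_rw [mul_assoc, ← Finset.sum_mul, unitary_row_sum hM', one_mul]
    ring
  rw [t5] at key
  rw [traceR_sub, t1, t2, t3, t4]
  linarith

lemma inv_antitone {C Ci M Mi : Mat n} (hC : C.PosSemidef) (hCi : Ciᴴ = Ci) (hMi : Miᴴ = Mi)
    (h1 : C * Ci = 1) (h2 : M * Mi = 1) (h : (M - C).PosSemidef) : (Ci - Mi).PosSemidef := by
  have h1' : Ci * C = 1 := mul_eq_one_comm.mp h1
  have h2' : Mi * M = 1 := mul_eq_one_comm.mp h2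
  have e : Ci - Mi = Miᴴ * (M - C) * Mi + (Ci - Mi)ᴴ * C * (Ci - Mi) := by
    rw [Matrix.conjTranspose_sub, hCi, hMi]
    have : Mi * (M - C) * Mi + (Ci - Mi) * C * (Ci - Mi) =
        (Mi * M) * Mi + (Ci * C) * Ci - (Ci * C) * Mi - Mi * (C * Ci) := by noncomm_ring
    rw [this, h1, h1', h2']
    simp
  rw [e]
  exact (h.conjTranspose_mul_mul_same _).add (hC.conjTranspose_mul_mul_same _)

lemma sq_le_sq_imp {A B : Mat n} (hA : A.PosSemidef) (hB : B.PosDef)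
    (h : (B * B - A * A).PosSemidef) : (B - A).PosSemidef := by
  have hH : (B - A).IsHermitian := hB.1.sub hA.1
  rw [hH.posSemidef_iff_eigenvalues_nonneg]
  intro i
  by_contra hneg
  simp only [Pi.zero_apply, not_le] at hneg
  set l := hH.eigenvalues i
  let v : n → ℂ := ⇑(hH.eigenvectorBasis i)
  have hv : (B - A) *ᵥ v = (l : ℂ) • v := by
    have := hH.mulVec_eigenvectorBasis i
    simpa using this
  have hv0 : v ≠ 0 := by
    intro h0
    have := hH.eigenvectorBasis.orthonormal.ne_zero i
    apply this
    ext j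
    exact congrFun h0 j
  have hv' : star v ᵥ* (B - A) = (l : ℂ) • star v := by
    have h3 := congrArg star hv
    rw [Matrix.star_mulVec, hH.eq] at h3
    rw [h3]
    ext j
    simp
  have e : B * B - A * A = (1/2 : ℂ) • ((B - A) * (B + A) + (B + A) * (B - A)) := by
    have : (B - A) * (B + A) + (B + A) * (B - A) = (2:ℂ) • (B * B - A * A) := by
      rw [two_smul]; noncomm_ring
    rw [this, smul_smul]; norm_num
  have q1 : star v ⬝ᵥ ((B * B - A * A) *ᵥ v) = (l : ℂ) * (star v ⬝ᵥ ((B + A) *ᵥ v)) := by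
    rw [e, Matrix.smul_mulVec, Matrix.add_mulVec, ← Matrix.mulVec_mulVec, ← Matrix.mulVec_mulVec, hv,
      dotProduct_smul, dotProduct_add, Matrix.dotProduct_mulVec (star v) (B - A), hv', Matrix.mulVec_smul,
      dotProduct_smul, smul_dotProduct]
    simp only [smul_eq_mul]
    ring
  have q2 := (Complex.nonneg_iff.mp (h.dotProduct_mulVec_nonneg v)).1
  have q3 := (Complex.pos_iff.mp ((hB.add_posSemidef hA).dotProduct_mulVec_pos hv0)).1
  rw [q1, Complex.re_ofReal_mul] at q2
  nlinarith

lemma snorm_two (x : Mat n) : snorm 2 x = √(hs x) := by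
  unfold snorm mpow
  have hx : IsSelfAdjoint (xᴴ * x) := Matrix.isHermitian_conjTranspose_mul_self x
  have : (fun y : ℝ => y ^ ((2:ℝ)/2)) = id := by funext y; simp
  rw [this, cfc_id ℝ (xᴴ * x) hx, traceR_conj_mul_self, Real.sqrt_eq_rpow]

lemma snorm_one {h : Mat n} (hh : hᴴ = h) : ∃ S : Mat n, Sᴴ = S ∧ S * S = 1 ∧ snorm 1 h = traceR (h * S) := by
  obtain ⟨U, l, hU, hU', he, hc, -, -⟩ := eig_exists (A := h) hh
  let s : n → ℝ := fun i => if 0 ≤ l i then 1 else -1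
  refine ⟨U * diagonal (fun i => (s i : ℂ)) * Uᴴ, (conj_diag_isHermitian U s).eq, ?_, ?_⟩
  · rw [conj_diag_mul hU]
    have : (fun i => (s i : ℂ) * (s i : ℂ)) = fun _ => 1 := by
      funext i
      simp only [s]
      split_ifs <;> simp
    rw [this, Matrix.diagonal_one, Matrix.mul_one, hU']
  · have e1 : cfc (fun x : ℝ => x ^ ((1:ℝ)/2)) (hᴴ * h) = cfc (fun x : ℝ => |x|) h := by
      have hsa : IsSelfAdjoint h := hh
      have : hᴴ * h = cfc (fun x : ℝ => x ^ 2) h := by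
        rw [cfc_pow_id (R := ℝ) h 2 hsa, hh, sq]
      have hfin : (spectrum ℝ h).Finite := Matrix.finite_real_spectrum
      have hcont : ContinuousOn (fun x : ℝ => x ^ 2) (spectrum ℝ h) := by fun_prop
      rw [this, ← cfc_comp' (fun x : ℝ => x ^ ((1:ℝ)/2)) (fun x : ℝ => x ^ 2) h
        (hg := ?_) (hf := hcont) (ha := hsa)]
      · congr 1; funext x
        rw [← Real.sqrt_eq_rpow, Real.sqrt_sq_eq_abs]
      · exact (hfin.image _).continuousOn _
    unfold snorm mpow
    rw [e1, hc]
    conv_rhs => rw [he]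
    rw [conj_diag_mul hU, traceR_conj_diag hU]
    have h := traceR_conj_diag hU (fun i => l i * s i)
    push_cast at h
    rw [h]
    simp only [div_one, Real.rpow_one]
    refine Finset.sum_congr rfl fun i _ => ?_
    simp only [s]
    split_ifs with h0
    · simp [abs_of_nonneg h0]
    · simp [abs_of_neg (not_le.mp h0)]

lemma snorm_one_le_add {a b : Mat n} (ha : a.PosSemidef) (hb : b.PosSemidef) :
    snorm 1 (a - b) ≤ traceR a + traceR b := by
  obtain ⟨S, hS, hSS, e⟩ := snorm_one (h := a - b) (by rw [Matrix.conjTranspose_sub, ha.1.eq, hb.1.eq])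
  have k : ∀ s : Mat n, sᴴ = s → s * s = 1 → (1 - s).PosSemidef := by
    intro s hs hss
    have : (1 - s) = (1/2 : ℝ) • ((1 - s)ᴴ * (1 - s)) := by
      have : (1 - s)ᴴ * (1 - s) = (2:ℝ) • (1 - s) := by
        rw [Matrix.conjTranspose_sub, Matrix.conjTranspose_one, hs, two_smul]
        have : (1 - s) * (1 - s) = 1 - s - s + s * s := by noncomm_ring
        rw [this, hss]; abel
      rw [this, smul_smul]; norm_num
    rw [this]
    exact (Matrix.posSemidef_conjTranspose_mul_self _).smul (by norm_num : (0:ℝ) ≤ 1/2)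
  have h1 := traceR_psd_mul_nonneg ha (k S hS hSS)
  have h2 := traceR_psd_mul_nonneg hb (k (-S) (by simp [hS]) (by simp [hSS]))
  rw [Matrix.mul_sub, Matrix.mul_one, traceR_sub] at h1 h2
  rw [Matrix.mul_neg] at h2
  have h3 : traceR (-(b * S)) = - traceR (b * S) := by simp [traceR]
  rw [h3] at h2
  rw [e, Matrix.sub_mul, traceR_sub]
  linarith

lemma traceR_weighted_le {h w v S : Mat n} (hw : wᴴ = w) (hv : vᴴ = v) (hwv : w * v = 1)
    (hh : hᴴ = h) (hS : Sᴴ = S) (hSS : S * S = 1) :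
    traceR (h * S) ≤ √(hs (w * h * w)) * √(traceR (v * v * v * v)) := by
  have hvw : v * w = 1 := mul_eq_one_comm.mp hwv
  have e : traceR (h * S) = traceR ((w * h * w)ᴴ * (v * S * v)) := by
    simp only [Matrix.conjTranspose_mul, hw, hh]
    calc _ = traceR ((v * w) * h * (w * v) * S) := by rw [hwv, hvw, Matrix.one_mul, Matrix.mul_one]
      _ = traceR (v * (w * h * w * v * S)) := by simp only [Matrix.mul_assoc]
      _ = _ := by rw [traceR_mul_comm]; simp only [Matrix.mul_assoc]
  rw [e]
  refine (traceR_cs _ _).trans ?_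
  gcongr
  have e2 : hs (v * S * v) = traceR ((S * (v * v))ᴴ * ((v * v) * S)) := by
    rw [← traceR_conj_mul_self]
    simp only [Matrix.conjTranspose_mul, hv, hS]
    calc _ = traceR (v * (S * v * v * S * v)) := by simp only [Matrix.mul_assoc]
      _ = traceR (S * (v * v * S * v * v)) := by
          rw [traceR_mul_comm]; simp only [Matrix.mul_assoc]
      _ = _ := by rw [traceR_mul_comm]; simp only [Matrix.mul_assoc]
  have e3 : hs ((v * v) * S) = traceR (v * v * v * v) := by
    rw [hs_mul_unitary_right _ _ (by rw [hS, hSS]), ← traceR_conj_mul_self]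
    simp only [Matrix.conjTranspose_mul, hv, Matrix.mul_assoc]
  have e4 : hs (S * (v * v)) = traceR (v * v * v * v) := by
    rw [hs_mul_unitary_left _ _ (by rw [hS, hSS]), ← traceR_conj_mul_self]
    simp only [Matrix.conjTranspose_mul, hv, Matrix.mul_assoc]
  rw [e2]
  refine (traceR_cs _ _).trans ?_
  rw [e3, e4, Real.mul_self_sqrt]
  rw [← e4]; exact hs_nonneg _

/-- A self-adjoint multiplicative-domain system: `T` unital positive and trace preserving,
`E` the projection onto the star-subalgebra `B` on which `T` is multiplicative. -/
structure Sys (B : Subalgebra ℂ (Mat n)) (T E : Mat n →ₗ[ℂ] Mat n) (μ : ℝ) : Prop where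
  star_mem : ∀ b ∈ B, bᴴ ∈ B
  T_one : T 1 = 1
  T_star : ∀ x, T xᴴ = (T x)ᴴ
  T_psd : ∀ x : Mat n, x.PosSemidef → (T x).PosSemidef
  T_trace : ∀ x, (T x).trace = x.trace
  T_mul_left : ∀ b ∈ B, ∀ x, T (b * x) = T b * T x
  T_mul_right : ∀ b ∈ B, ∀ x, T (x * b) = T x * T b
  T_mem : ∀ b ∈ B, T b ∈ B
  T_T : ∀ b ∈ B, T (T b) = b
  E_mem : ∀ x, E x ∈ B
  E_id : ∀ b ∈ B, E b = b
  E_tr : ∀ x, ∀ b ∈ B, ((E x)ᴴ * b).trace = (xᴴ * b).trace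
  E_T : ∀ x, E (T x) = T (E x)
  mu_nonneg : 0 ≤ μ
  contr : ∀ x, √(hs (T (x - E x))) ≤ μ * √(hs x)

lemma hs_eq_zero {x : Mat n} (h : hs x = 0) : x = 0 := by
  unfold hs at h
  rw [Finset.sum_eq_zero_iff_of_nonneg (fun i _ => by positivity)] at h
  ext i j
  have := h i (Finset.mem_univ _)
  rw [Finset.sum_eq_zero_iff_of_nonneg (fun i _ => by positivity)] at this
  simpa using this j (Finset.mem_univ _)

lemma eq_of_trace {x y : Mat n} (h : ∀ z : Mat n, (zᴴ * x).trace = (zᴴ * y).trace) : x = y := by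
  rw [← sub_eq_zero]
  apply hs_eq_zero
  rw [← traceR_conj_mul_self, traceR, Matrix.mul_sub, Matrix.trace_sub, h, sub_self]
  rfl

lemma cp_block {m : ℕ} {T : Mat (Fin m) →ₗ[ℂ] Mat (Fin m)} (hT : IsCP T) (k : ℕ)
    (v : Fin k → Mat (Fin m)) :
    (Matrix.of fun a b : Fin k × Fin m => T ((v a.1)ᴴ * v b.1) a.2 b.2).PosSemidef := by
  let V : Matrix (Fin m) (Fin k × Fin m) ℂ := Matrix.of fun r a => v a.1 r a.2
  have := hT k (Vᴴ * V) (Matrix.posSemidef_conjTranspose_mul_self V)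
  convert this using 1
  ext a b
  simp only [ampFun, Matrix.of_apply]
  rfl

lemma cp_star {m : ℕ} {T : Mat (Fin m) →ₗ[ℂ] Mat (Fin m)} (hT : IsCP T) (x : Mat (Fin m)) :
    T xᴴ = (T x)ᴴ := by
  have := (cp_block hT 2 ![1, x]).1
  ext i j
  have := congrFun (congrFun this (1, i)) (0, j)
  simp [Matrix.conjTranspose_apply] at this
  rw [Matrix.conjTranspose_apply, ← this]; simp

lemma cp_psd {m : ℕ} {T : Mat (Fin m) →ₗ[ℂ] Mat (Fin m)} (hT : IsCP T) (x : Mat (Fin m)) 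
    (hx : x.PosSemidef) : (T x).PosSemidef := by
  obtain ⟨C, rfl⟩ : ∃ C : Mat (Fin m), x = Cᴴ * C := by
    open scoped MatrixOrder in
    obtain ⟨C, hC⟩ := CStarAlgebra.nonneg_iff_eq_star_mul_self.mp hx.nonneg
    exact ⟨C, hC⟩
  have := (cp_block hT 1 ![C]).submatrix (fun i : Fin m => ((0 : Fin 1), i))
  convert this using 1
  ext i j
  simp

lemma cp_kadison {m : ℕ} {T : Mat (Fin m) →ₗ[ℂ] Mat (Fin m)} (hT : IsCP T) (hT1 : T 1 = 1)
    (x : Mat (Fin m)) : (T (xᴴ * x) - (T x)ᴴ * T x).PosSemidef := by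
  have h := cp_block hT 2 ![1, x]
  let W : Matrix (Fin 2 × Fin m) (Fin m) ℂ := Matrix.of fun a j => 
    (![- T x, 1] : Fin 2 → Mat (Fin m)) a.1 a.2 j
  have h2 := h.conjTranspose_mul_mul_same W
  convert h2 using 1
  have key : ∀ (M : Fin 2 → Fin 2 → Mat (Fin m)) (w : Fin 2 → Mat (Fin m)), 
     (Matrix.of fun (a : Fin 2 × Fin m) j => w a.1 a.2 j)ᴴ * (Matrix.of fun a b : Fin 2 × Fin m => M a.1 b.1 a.2 b.2) * (Matrix.of fun (a : Fin 2 × Fin m) j => w a.1 a.2 j) = ∑ i, ∑ j, (w i)ᴴ * M i j * w j := by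
    intro M w
    ext p q
    simp only [Matrix.mul_apply, Fintype.sum_prod_type, Matrix.sum_apply, Matrix.of_apply,
      Matrix.conjTranspose_apply, Fin.sum_univ_two, Finset.sum_add_distrib, add_mul, Matrix.add_apply]
    ring
  have k2 := key (fun i j => T (((![1, x] : Fin 2 → Mat (Fin m)) i)ᴴ * (![1, x] : Fin 2 → Mat (Fin m)) j)) ![- T x, 1]
  refine Eq.trans ?_ k2.symm
  simp [Fin.sum_univ_two, hT1, cp_star hT]
  abel

lemma herm_zero {H F : Mat n} (hH : Hᴴ = H) (h : ∀ t : ℝ, (t • H + F).PosSemidef) : H = 0 := by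
  have h0 : ∀ P : Mat n, P.PosSemidef → traceR (H * P) = 0 := by
    intro P hP
    have h1 : ∀ t : ℝ, 0 ≤ t * traceR (H * P) + traceR (F * P) := by
      intro t
      have := traceR_psd_mul_nonneg (h t) hP
      rwa [Matrix.add_mul, traceR_add, Matrix.smul_mul, traceR_smul] at this
    by_contra hne
    have := h1 (-(traceR (F * P) + 1) / traceR (H * P))
    rw [div_mul_cancel₀ _ hne] at this
    linarith
  have h1 := h0 _ (Matrix.posSemidef_conjTranspose_mul_self (1 + H))
  have h2 := h0 _ (Matrix.posSemidef_conjTranspose_mul_self (1 - H))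
  apply hs_eq_zero
  rw [← traceR_conj_mul_self, hH]
  have : H * H + H * H + H * H + H * H = H * ((1 + H)ᴴ * (1 + H)) - H * ((1 - H)ᴴ * (1 - H)) := by
    simp only [Matrix.conjTranspose_add, Matrix.conjTranspose_sub, hH, Matrix.conjTranspose_one]
    noncomm_ring
  have h3 := congrArg traceR this
  rw [traceR_sub, h1, h2] at h3
  simp only [traceR_add] at h3
  linarith

lemma defect_zero {A F : Mat n} (h : ∀ c : ℂ, (star c • A + c • Aᴴ + F).PosSemidef) : A = 0 := by
  have h1 : A + Aᴴ = 0 := by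
    apply herm_zero (F := F)
    · simp [add_comm]
    · intro t
      convert h (t : ℂ) using 2
      ext i j; simp [mul_add]
  have h2 : Complex.I • (Aᴴ - A) = 0 := by
    apply herm_zero (F := F)
    · simp [Matrix.conjTranspose_smul, ← smul_neg]
    · intro t
      convert h (t * Complex.I : ℂ) using 2
      ext i j; simp; ring
  have h3 : Aᴴ - A = 0 := by simpa using h2
  have h4 : Aᴴ = A := sub_eq_zero.mp h3
  rw [h4] at h1
  have : (2:ℂ) • A = 0 := by rw [two_smul]; exact h1
  simpa using this

lemma mult_of_defect {m : ℕ} {T : Mat (Fin m) →ₗ[ℂ] Mat (Fin m)} (hT : IsCP T) (hT1 : T 1 = 1)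
    {a : Mat (Fin m)} (ha : T (aᴴ * a) = T aᴴ * T a) (x : Mat (Fin m)) :
    T (aᴴ * x) = T aᴴ * T x := by
  rw [← sub_eq_zero]
  apply defect_zero (F := T (xᴴ * x) - (T x)ᴴ * T x)
  intro c
  convert cp_kadison hT hT1 (c • a + x) using 1
  have e : ((T (aᴴ * x) - T aᴴ * T x))ᴴ = T (xᴴ * a) - (T x)ᴴ * T a := by
    rw [Matrix.conjTranspose_sub, ← cp_star hT, cp_star hT a]
    simp
  rw [e]
  simp only [Matrix.conjTranspose_add, Matrix.conjTranspose_smul, Matrix.add_mul, Matrix.mul_add,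
    Matrix.smul_mul, Matrix.mul_smul, map_add, map_smul, ha, ← cp_star hT]
  module

lemma mem_multDomain {m : ℕ} {T : Mat (Fin m) →ₗ[ℂ] Mat (Fin m)} (hT : IsCP T) (hT1 : T 1 = 1)
    (a : Mat (Fin m)) : a ∈ multDomain T ↔ (∀ x, T (a * x) = T a * T x) ∧ ∀ x, T (x * a) = T x * T a := by
  constructor
  · rintro ⟨h1, h2⟩
    have k1 : ∀ x, T (aᴴ * x) = T aᴴ * T x := mult_of_defect hT hT1 h1
    have k2 : ∀ x, T (a * x) = T a * T x := by
      have := mult_of_defect hT hT1 (a := aᴴ) (by simpa using h2)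
      simpa using this
    refine ⟨k2, fun x => ?_⟩
    have := congrArg Matrix.conjTranspose (k1 xᴴ)
    rw [← cp_star hT, Matrix.conjTranspose_mul, Matrix.conjTranspose_mul, ← cp_star hT, ← cp_star hT] at this
    simpa using this
  · rintro ⟨h1, h2⟩
    exact ⟨h2 _, h1 _⟩

/-- The multiplicative domain as a subalgebra. -/
def mdAlg {m : ℕ} (T : Mat (Fin m) →ₗ[ℂ] Mat (Fin m)) (hT1 : T 1 = 1) : Subalgebra ℂ (Mat (Fin m)) where
  carrier := {a | (∀ x, T (a * x) = T a * T x) ∧ ∀ x, T (x * a) = T x * T a}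
  mul_mem' := by
    rintro a b ⟨ha, ha'⟩ ⟨hb, hb'⟩
    refine ⟨fun x => ?_, fun x => ?_⟩
    · rw [Matrix.mul_assoc, ha, hb, ha, Matrix.mul_assoc]
    · rw [← Matrix.mul_assoc, hb', ha', ha, Matrix.mul_assoc]
  add_mem' := by
    rintro a b ⟨ha, ha'⟩ ⟨hb, hb'⟩
    refine ⟨fun x => ?_, fun x => ?_⟩
    · simp [Matrix.add_mul, ha, hb]
    · simp [Matrix.mul_add, ha', hb']
  algebraMap_mem' := by
    intro c
    rw [Algebra.algebraMap_eq_smul_one]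
    refine ⟨fun x => ?_, fun x => ?_⟩ <;> simp [hT1]

lemma coe_mdAlg {m : ℕ} {T : Mat (Fin m) →ₗ[ℂ] Mat (Fin m)} (hT : IsCP T) (hT1 : T 1 = 1) :
    (mdAlg T hT1 : Set (Mat (Fin m))) = multDomain T := by
  ext a
  rw [mem_multDomain hT hT1]
  rfl

lemma condExp_unique {B : Set (Mat n)} {E : Mat n →ₗ[ℂ] Mat n} (hB : ∀ x ∈ B, ∀ y ∈ B, x - y ∈ B)
    (hE : IsCondExp B E) {x z : Mat n} (hz : z ∈ B)
    (h : ∀ y ∈ B, (zᴴ * y).trace = (xᴴ * y).trace) : E x = z := by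
  rw [← sub_eq_zero]
  apply hs_eq_zero
  have hm := hB _ (hE.1 x) _ hz
  rw [← traceR_conj_mul_self, Matrix.conjTranspose_sub, Matrix.sub_mul, traceR, Matrix.trace_sub,
    hE.2.2 x _ hm, h _ hm, sub_self]
  rfl

lemma contr_of_norm22 {Φ : Mat n →ₗ[ℂ] Mat n} {C : ℝ} (hC : 0 ≤ C) (h : ∀ x, √(hs (Φ x)) ≤ C * √(hs x)) :
    0 ≤ norm22 Φ ∧ ∀ x, √(hs (Φ x)) ≤ norm22 Φ * √(hs x) := by
  have hb : BddAbove {c : ℝ | ∃ x : Mat n, snorm 2 x ≤ 1 ∧ c = snorm 2 (Φ x)} := by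
    refine ⟨C, ?_⟩
    rintro c ⟨x, hx, rfl⟩
    rw [snorm_two] at *
    exact (h x).trans (by nlinarith [Real.sqrt_nonneg (hs x)])
  have hs0 : hs (0 : Mat n) = 0 := by simp [hs]
  have h0 : 0 ≤ norm22 Φ := by
    apply le_csSup hb
    refine ⟨0, ?_, ?_⟩ <;> simp [snorm_two, hs0]
  refine ⟨h0, fun x => ?_⟩
  have hsm : ∀ (c : ℝ) (y : Mat n), 0 ≤ c → √(hs ((c:ℂ) • y)) = c * √(hs y) := by
    intro c y hc
    have : hs ((c:ℂ) • y) = c ^ 2 * hs y := by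
      simp [hs, Finset.mul_sum, mul_pow]
    rw [this, Real.sqrt_mul (by positivity), Real.sqrt_sq hc]
  by_cases hx : √(hs x) = 0
  · have := h x
    rw [hx] at *
    simpa using this
  · have hpos : 0 < √(hs x) := lt_of_le_of_ne (Real.sqrt_nonneg _) (Ne.symm hx)
    have : snorm 2 (Φ ((((√(hs x))⁻¹ : ℝ) : ℂ) • x)) ≤ norm22 Φ := by
      apply le_csSup hb
      refine ⟨_, ?_, rfl⟩
      rw [snorm_two, hsm _ _ (by positivity), inv_mul_cancel₀ hx]
    rw [snorm_two, map_smul, hsm _ _ (by positivity), inv_mul_le_iff₀ hpos] at this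
    linarith

lemma hs_sub_proj {B : Set (Mat n)} {E : Mat n →ₗ[ℂ] Mat n} (hE : IsCondExp B E) (x : Mat n) :
    hs (x - E x) ≤ hs x := by
  have h1 : ((x)ᴴ * E x).trace = ((E x)ᴴ * E x).trace := (hE.2.2 x _ (hE.1 x)).symm
  have h2 : traceR ((E x)ᴴ * x) = hs (E x) := by
    have : ((E x)ᴴ * x) = ((x)ᴴ * E x)ᴴ := by simp
    rw [this, traceR, Matrix.trace_conjTranspose, h1, ← traceR_conj_mul_self, traceR]
    simp
  have h3 : traceR (xᴴ * E x) = hs (E x) := by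
    rw [traceR, h1, ← traceR_conj_mul_self, traceR]
  rw [← traceR_conj_mul_self, Matrix.conjTranspose_sub, Matrix.sub_mul, Matrix.mul_sub, Matrix.mul_sub]
  rw [traceR_sub, traceR_sub, traceR_sub, h2, h3, traceR_conj_mul_self, traceR_conj_mul_self]
  linarith [hs_nonneg (E x)]

lemma baseSys {m : ℕ} (T : Mat (Fin m) →ₗ[ℂ] Mat (Fin m))
    (hT1 : T 1 = 1) (hTcp : IsCP T)
    (hTsa : ∀ x y : Mat (Fin m), (xᴴ * T y).trace = ((T x)ᴴ * y).trace)
    (E : Mat (Fin m) →ₗ[ℂ] Mat (Fin m)) (hE : IsCondExp (multDomain T) E)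
    (μ : ℝ) (hμdef : μ = norm22 (T ∘ₗ (LinearMap.id - E))) :
    Sys (mdAlg T hT1) T E μ := by
  have hst := cp_star hTcp
  have htr : ∀ x, (T x).trace = x.trace := by
    intro x
    have := hTsa 1 x
    simpa [hT1] using this
  rw [← coe_mdAlg hTcp hT1] at hE
  have hTT : ∀ b ∈ mdAlg T hT1, T (T b) = b := by
    rintro b ⟨hb, hb'⟩
    apply eq_of_trace
    intro z
    rw [hTsa, ← hst, ← hb', htr]
  have hTm : ∀ b ∈ mdAlg T hT1, T b ∈ mdAlg T hT1 := by
    intro b hbm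
    obtain ⟨hb, hb'⟩ := hbm
    have key : ∀ x, T (T b * x) = b * T x := by
      intro x
      apply eq_of_trace
      intro y
      rw [hTsa, ← hst, ← Matrix.mul_assoc, ← hb']
      have : T (yᴴ * b) = (T (yᴴ * b)ᴴ)ᴴ := by rw [← hst]; simp
      rw [this, ← hTsa]
      simp [Matrix.mul_assoc]
    have key2 : ∀ x, T (x * T b) = T x * b := by
      intro x
      apply eq_of_trace
      intro y
      rw [hTsa, ← hst, Matrix.trace_mul_comm, Matrix.mul_assoc, ← hb]
      rw [Matrix.trace_mul_comm]
      have : T (b * yᴴ) = (T (b * yᴴ)ᴴ)ᴴ := by rw [← hst]; simp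
      rw [this, ← hTsa]
      simp only [Matrix.conjTranspose_conjTranspose]
      rw [Matrix.trace_mul_comm, ← Matrix.mul_assoc, Matrix.trace_mul_comm]
    refine ⟨fun x => ?_, fun x => ?_⟩
    · rw [key, hTT b ⟨hb, hb'⟩]
    · rw [key2, hTT b ⟨hb, hb'⟩]
  have hTE : ∀ x, E (T x) = T (E x) := by
    intro x
    refine condExp_unique (fun x hx y hy => sub_mem hx hy) hE (hTm _ (hE.1 x)) ?_
    intro y hy
    rw [← hTsa, ← hTsa]
    exact hE.2.2 x _ (hTm _ hy)
  have hcon : ∀ x, hs (T x) ≤ hs x := by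
    intro x
    have := traceR_psd_nonneg (cp_kadison hTcp hT1 x)
    rw [traceR_sub, traceR, htr, traceR_conj_mul_self] at this
    have h2 := traceR_conj_mul_self x
    rw [traceR] at h2
    linarith
  have hn := contr_of_norm22 (Φ := T ∘ₗ (LinearMap.id - E)) zero_le_one (fun x => by
    rw [one_mul]
    apply Real.sqrt_le_sqrt
    exact (hcon _).trans (hs_sub_proj hE x))
  rw [← hμdef] at hn
  exact {
    star_mem := by
      rintro b ⟨hb, hb'⟩
      refine ⟨fun x => ?_, fun x => ?_⟩
      · have := congrArg Matrix.conjTranspose (hb' xᴴ)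
        rw [← hst, Matrix.conjTranspose_mul, Matrix.conjTranspose_mul, ← hst, ← hst] at this
        simpa using this
      · have := congrArg Matrix.conjTranspose (hb xᴴ)
        rw [← hst, Matrix.conjTranspose_mul, Matrix.conjTranspose_mul, ← hst, ← hst] at this
        simpa using this
    T_one := hT1
    T_star := hst
    T_psd := cp_psd hTcp
    T_trace := htr
    T_mul_left := fun b hb => hb.1
    T_mul_right := fun b hb => hb.2
    T_mem := hTm
    T_T := hTT
    E_mem := hE.1
    E_id := hE.2.1
    E_tr := fun x b hb => hE.2.2 x b hb
    E_T := hTE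
    mu_nonneg := hn.1
    contr := fun x => hn.2 x }

section amp
variable {k : Type*} [Fintype k] [DecidableEq k]

/-- The `(i,j)` block of a matrix over `k × n`. -/
def blk (X : Mat (k × n)) (i j : k) : Mat n := Matrix.of fun s t => X (i, s) (j, t)

lemma blk_ext {X Y : Mat (k × n)} (h : ∀ i j, blk X i j = blk Y i j) : X = Y := by
  ext ⟨i, s⟩ ⟨j, t⟩
  exact congrFun (congrFun (h i j) s) t

lemma blk_ampFun (Φ : Mat n →ₗ[ℂ] Mat n) (X : Mat (k × n)) (i j : k) :
    blk (ampFun k Φ X) i j = Φ (blk X i j) := rfl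

lemma blk_mul (X Y : Mat (k × n)) (i j : k) : blk (X * Y) i j = ∑ l, blk X i l * blk Y l j := by
  ext s t
  simp [blk, Matrix.mul_apply, Matrix.sum_apply, Fintype.sum_prod_type]

lemma blk_add (X Y : Mat (k × n)) (i j : k) : blk (X + Y) i j = blk X i j + blk Y i j := rfl
lemma blk_sub (X Y : Mat (k × n)) (i j : k) : blk (X - Y) i j = blk X i j - blk Y i j := rfl
lemma blk_smul (c : ℂ) (X : Mat (k × n)) (i j : k) : blk (c • X) i j = c • blk X i j := rfl
lemma blk_star (X : Mat (k × n)) (i j : k) : blk Xᴴ i j = (blk X j i)ᴴ := rfl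
lemma blk_one (i j : k) : blk (1 : Mat (k × n)) i j = if i = j then 1 else 0 := by
  ext s t
  by_cases h : i = j <;> simp [blk, h, Matrix.one_apply]

lemma trace_blk (X : Mat (k × n)) : X.trace = ∑ i, (blk X i i).trace := by
  simp [Matrix.trace, blk, Fintype.sum_prod_type]

lemma hs_blk (X : Mat (k × n)) : hs X = ∑ i, ∑ j, hs (blk X i j) := by
  simp only [hs, blk, Fintype.sum_prod_type, Matrix.of_apply]
  refine Finset.sum_congr rfl fun i _ => ?_
  rw [Finset.sum_comm]

/-- The amplification as a linear map. -/
def ampLin (k : Type*) [Fintype k] [DecidableEq k] (Φ : Mat n →ₗ[ℂ] Mat n) :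
    Mat (k × n) →ₗ[ℂ] Mat (k × n) where
  toFun := ampFun k Φ
  map_add' X Y := blk_ext fun i j => by simp only [blk_add, blk_ampFun, map_add]
  map_smul' c X := blk_ext fun i j => by simp only [blk_smul, blk_ampFun, map_smul, RingHom.id_apply]

lemma blk_ampLin (Φ : Mat n →ₗ[ℂ] Mat n) (X : Mat (k × n)) (i j : k) :
    blk (ampLin k Φ X) i j = Φ (blk X i j) := rfl

/-- The amplification of a subalgebra. -/
def ampAlg (k : Type*) [Fintype k] [DecidableEq k] (B : Subalgebra ℂ (Mat n)) :
    Subalgebra ℂ (Mat (k × n)) where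
  carrier := {X | ∀ i j, blk X i j ∈ B}
  mul_mem' := by
    intro X Y hX hY i j
    rw [blk_mul]
    exact sum_mem fun l _ => mul_mem (hX i l) (hY l j)
  add_mem' := by
    intro X Y hX hY i j
    exact add_mem (hX i j) (hY i j)
  algebraMap_mem' := by
    intro c i j
    rw [Algebra.algebraMap_eq_smul_one, blk_smul, blk_one]
    apply B.smul_mem
    split_ifs
    · exact one_mem _
    · exact zero_mem _

open scoped Kronecker in
lemma coe_ampAlg (B : Subalgebra ℂ (Mat n)) :
    (ampAlg k B : Set (Mat (k × n))) = tensorSpan (Set.univ : Set (Mat k)) (B : Set (Mat n)) := by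
  apply Set.Subset.antisymm
  · intro X hX
    have e : X = ∑ i, ∑ j, (Matrix.single i j (1:ℂ) : Mat k) ⊗ₖ blk X i j := by
      ext ⟨a, s⟩ ⟨b, t⟩
      simp [Matrix.sum_apply, Matrix.kroneckerMap_apply, Matrix.single_apply, blk, ite_and]
    rw [e]
    unfold tensorSpan
    refine Submodule.sum_mem _ fun i _ => Submodule.sum_mem _ fun j _ => Submodule.subset_span ?_
    exact ⟨_, Set.mem_univ _, _, hX i j, rfl⟩
  · intro X hX
    have : Submodule.span ℂ {z : Mat (k × n) | ∃ x ∈ (Set.univ : Set (Mat k)), ∃ y ∈ (B : Set (Mat n)), z = x ⊗ₖ y} ≤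
        Subalgebra.toSubmodule (ampAlg k B) := by
      rw [Submodule.span_le]
      rintro z ⟨x, -, y, hy, rfl⟩ i j
      exact B.smul_mem hy (x i j)
    exact this hX

lemma ampSys {B : Subalgebra ℂ (Mat n)} {T E : Mat n →ₗ[ℂ] Mat n} {μ : ℝ} (S : Sys B T E μ)
    (hp : ∀ X : Mat (k × n), X.PosSemidef → (ampFun k T X).PosSemidef) :
    Sys (ampAlg k B) (ampLin k T) (ampLin k E) μ where
  star_mem := fun b hb i j => by rw [blk_star]; exact S.star_mem _ (hb j i)
  T_one := blk_ext fun i j => by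
    rw [blk_ampLin, blk_one]
    split_ifs
    · exact S.T_one
    · simp
  T_star := fun x => blk_ext fun i j => by
    rw [blk_star, blk_ampLin, blk_ampLin, blk_star, S.T_star]
  T_psd := hp
  T_trace := fun x => by
    rw [trace_blk, trace_blk]
    exact Finset.sum_congr rfl fun i _ => by rw [blk_ampLin, S.T_trace]
  T_mul_left := fun b hb x => blk_ext fun i j => by
    rw [blk_ampLin, blk_mul, blk_mul, map_sum]
    exact Finset.sum_congr rfl fun l _ => by rw [blk_ampLin, blk_ampLin, S.T_mul_left _ (hb i l)]
  T_mul_right := fun b hb x => blk_ext fun i j => by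
    rw [blk_ampLin, blk_mul, blk_mul, map_sum]
    exact Finset.sum_congr rfl fun l _ => by rw [blk_ampLin, blk_ampLin, S.T_mul_right _ (hb l j)]
  T_mem := fun b hb i j => by rw [blk_ampLin]; exact S.T_mem _ (hb i j)
  T_T := fun b hb => blk_ext fun i j => by rw [blk_ampLin, blk_ampLin, S.T_T _ (hb i j)]
  E_mem := fun x i j => by rw [blk_ampLin]; exact S.E_mem _
  E_id := fun b hb => blk_ext fun i j => by rw [blk_ampLin, S.E_id _ (hb i j)]
  E_tr := fun x b hb => by
    rw [trace_blk, trace_blk]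
    refine Finset.sum_congr rfl fun i _ => ?_
    rw [blk_mul, blk_mul, Matrix.trace_sum, Matrix.trace_sum]
    refine Finset.sum_congr rfl fun l _ => ?_
    rw [blk_star, blk_star, blk_ampLin]
    exact S.E_tr _ _ (hb l i)
  E_T := fun x => blk_ext fun i j => by simp only [blk_ampLin, S.E_T]
  mu_nonneg := S.mu_nonneg
  contr := fun x => by
    have h : hs (ampLin k T (x - ampLin k E x)) ≤ μ ^ 2 * hs x := by
      rw [hs_blk, hs_blk, Finset.mul_sum]
      refine Finset.sum_le_sum fun i _ => ?_
      rw [Finset.mul_sum]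
      refine Finset.sum_le_sum fun j _ => ?_
      have := S.contr (blk x i j)
      rw [blk_ampLin, blk_sub, blk_ampLin]
      have h2 := pow_le_pow_left₀ (Real.sqrt_nonneg _) this 2
      rwa [mul_pow, Real.sq_sqrt (hs_nonneg _), Real.sq_sqrt (hs_nonneg _)] at h2
    refine (Real.sqrt_le_sqrt h).trans_eq ?_
    rw [Real.sqrt_mul (by positivity), Real.sqrt_sq S.mu_nonneg]
end amp

lemma Sys.comp {B : Subalgebra ℂ (Mat n)} {T T' E : Mat n →ₗ[ℂ] Mat n} {μ ν : ℝ}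
    (S : Sys B T E μ) (S' : Sys B T' E ν) (hc : ∀ x, T (T' x) = T' (T x)) :
    Sys B (T ∘ₗ T') E (μ * ν) where
  star_mem := S.star_mem
  T_one := by simp [S.T_one, S'.T_one]
  T_star := fun x => by simp [S.T_star, S'.T_star]
  T_psd := fun x hx => S.T_psd _ (S'.T_psd _ hx)
  T_trace := fun x => by simp [S.T_trace, S'.T_trace]
  T_mul_left := fun b hb x => by simp [S'.T_mul_left b hb, S.T_mul_left _ (S'.T_mem b hb)]
  T_mul_right := fun b hb x => by simp [S'.T_mul_right b hb, S.T_mul_right _ (S'.T_mem b hb)]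
  T_mem := fun b hb => S.T_mem _ (S'.T_mem b hb)
  T_T := fun b hb => by
    simp only [LinearMap.comp_apply]
    rw [← hc (T' b), S'.T_T _ hb, S.T_T _ hb]
  E_mem := S.E_mem
  E_id := S.E_id
  E_tr := S.E_tr
  E_T := fun x => by simp [S.E_T, S'.E_T]
  mu_nonneg := mul_nonneg S.mu_nonneg S'.mu_nonneg
  contr := fun x => by
    have h1 : E (T' (x - E x)) = 0 := by
      rw [S'.E_T, map_sub, S.E_id _ (S.E_mem x), sub_self, map_zero]
    have h2 := S.contr (T' (x - E x))
    rw [h1, sub_zero] at h2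
    have h3 := S'.contr x
    calc _ ≤ _ := h2
      _ ≤ μ * (ν * √(hs x)) := mul_le_mul_of_nonneg_left h3 S.mu_nonneg
      _ = _ := by ring

lemma Sys.pow {B : Subalgebra ℂ (Mat n)} {T E : Mat n →ₗ[ℂ] Mat n} {μ : ℝ}
    (S : Sys B T E μ) (k : ℕ) : Sys B (T ^ (k + 1)) E (μ ^ (k + 1)) := by
  induction k with
  | zero => simpa using S
  | succ k ih =>
    rw [pow_succ' T, pow_succ' μ]
    refine S.comp ih fun x => ?_
    have : T * T ^ (k + 1) = T ^ (k + 1) * T := by rw [← pow_succ, ← pow_succ']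
    exact congrArg (fun f : Mat n →ₗ[ℂ] Mat n => f x) this

section
variable {B : Subalgebra ℂ (Mat n)} {T E : Mat n →ₗ[ℂ] Mat n} {μ : ℝ}

lemma Sys.E_unique (S : Sys B T E μ) {x z : Mat n} (hz : z ∈ B)
    (h : ∀ y ∈ B, (zᴴ * y).trace = (xᴴ * y).trace) : E x = z :=
  condExp_unique (B := (B : Set (Mat n))) (fun _ hx _ hy => sub_mem hx hy)
    ⟨S.E_mem, S.E_id, fun x y hy => S.E_tr x y hy⟩ hz h

lemma Sys.E_star (S : Sys B T E μ) (x : Mat n) : E xᴴ = (E x)ᴴ := by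
  refine S.E_unique (S.star_mem _ (S.E_mem x)) fun y hy => ?_
  have := congrArg star (S.E_tr x _ (S.star_mem _ hy))
  rw [← Matrix.trace_conjTranspose, ← Matrix.trace_conjTranspose] at this
  simp only [Matrix.conjTranspose_mul, Matrix.conjTranspose_conjTranspose] at this ⊢
  rw [Matrix.trace_mul_comm, this, Matrix.trace_mul_comm]

lemma Sys.E_mul_left (S : Sys B T E μ) {b : Mat n} (hb : b ∈ B) (x : Mat n) : E (b * x) = b * E x := by
  refine S.E_unique (mul_mem hb (S.E_mem x)) fun y hy => ?_
  rw [Matrix.conjTranspose_mul, Matrix.conjTranspose_mul, Matrix.mul_assoc, Matrix.mul_assoc]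
  exact S.E_tr x _ (mul_mem (S.star_mem _ hb) hy)

lemma Sys.E_mul_right (S : Sys B T E μ) {b : Mat n} (hb : b ∈ B) (x : Mat n) : E (x * b) = E x * b := by
  have := S.E_mul_left (S.star_mem _ hb) xᴴ
  have := congrArg Matrix.conjTranspose this
  rw [← S.E_star, Matrix.conjTranspose_mul, Matrix.conjTranspose_mul, ← S.E_star] at this
  simpa using this

lemma Sys.E_trace (S : Sys B T E μ) (x : Mat n) : (E x).trace = x.trace := by
  have := S.E_tr xᴴ 1 (one_mem B)
  rw [S.E_star] at this
  simpa using this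

/-- Orthogonality of `x - E x` against `B`. -/
lemma Sys.orth (S : Sys B T E μ) {b : Mat n} (hb : b ∈ B) (x : Mat n) : (b * (x - E x)).trace = 0 := by
  have := S.E_trace (b * x)
  rw [S.E_mul_left hb] at this
  rw [Matrix.mul_sub, Matrix.trace_sub, this, sub_self]

lemma Sys.E_psd (S : Sys B T E μ) {x : Mat n} (hx : x.PosSemidef) : (E x).PosSemidef := by
  have hH : (E x).IsHermitian := by
    have := S.E_star x
    rw [hx.1] at this
    exact this.symm
  obtain ⟨U, l, hU, hU', he, hc, -, -⟩ := eig_exists hH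
  set c := cfc (fun t : ℝ => max (-t) 0) (E x) with hcdef
  have hcB : c ∈ B := cfc_mem_subalg B hH (S.E_mem x) _
  have hcp : c.PosSemidef := by
    rw [hcdef, hc]
    exact conj_diag_psd U (fun i => le_max_right _ _)
  have h1 := traceR_psd_mul_nonneg hcp hx
  have h2 : traceR (c * x) = traceR (c * E x) := by
    have := S.orth hcB x
    rw [Matrix.mul_sub, Matrix.trace_sub, sub_eq_zero] at this
    simp [traceR, this]
  have h3 : c * E x = U * diagonal (fun i => ((max (-(l i)) 0 * l i : ℝ) : ℂ)) * Uᴴ := by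
    rw [hcdef, hc, he, conj_diag_mul hU]
    simp
  rw [h2, h3, traceR_conj_diag hU] at h1
  have h4 : ∀ i, max (-(l i)) 0 * l i ≤ 0 := by
    intro i
    rcases le_total 0 (l i) with h | h
    · rw [max_eq_right (by linarith)]; simp
    · rw [max_eq_left (by linarith)]; nlinarith
  have h5 : ∀ i, 0 ≤ l i := by
    intro i
    by_contra hneg
    push Not at hneg
    have : ∑ i, max (-(l i)) 0 * l i < 0 := by
      apply Finset.sum_neg' (fun j _ => h4 j)
      refine ⟨i, Finset.mem_univ _, ?_⟩
      rw [max_eq_left (by linarith)]; nlinarith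
    linarith
  rw [he]
  exact conj_diag_psd U h5
end

lemma mpow_two {X : Mat n} (hX : X.IsHermitian) : traceR (mpow X 2) = hs X := by
  obtain ⟨U, l, hU, hU', he, hc, -, -⟩ := eig_exists hX
  have : mpow X 2 = Xᴴ * X := by
    rw [hX, mpow, hc]
    conv_rhs => rw [he, conj_diag_mul hU]
    congr 3
    ext i
    rw [Real.rpow_two]; push_cast; ring
  rw [this, traceR_conj_mul_self]

/-- `Tr ((σ^{-1/4} ρ σ^{-1/4})^2)`. -/
def Qf (ρ σ : Mat n) : ℝ := traceR (mpow (sandwich 2 ρ σ) 2)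

lemma hs_conj_diag (U : Mat n) (hU : Uᴴ * U = 1) (d : n → ℝ) (ρ : Mat n) :
    hs ((U * diagonal (fun i => (d i : ℂ)) * Uᴴ) * ρ * (U * diagonal (fun i => (d i : ℂ)) * Uᴴ)) =
      ∑ i, ∑ j, (d i * d j) ^ 2 * ‖(Uᴴ * ρ * U) i j‖ ^ 2 := by
  have e : (U * diagonal (fun i => (d i : ℂ)) * Uᴴ) * ρ * (U * diagonal (fun i => (d i : ℂ)) * Uᴴ) =
    U * (diagonal (fun i => (d i : ℂ)) * (Uᴴ * ρ * U) * diagonal (fun i => (d i : ℂ))) * Uᴴ := by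
    simp only [Matrix.mul_assoc]
  rw [e, hs_mul_unitary_right _ _ (by simpa using hU), hs_mul_unitary_left _ _ hU]
  unfold hs
  refine Finset.sum_congr rfl fun i _ => Finset.sum_congr rfl fun j _ => ?_
  rw [Matrix.mul_diagonal, Matrix.diagonal_mul]
  simp only [norm_mul, mul_pow, Complex.norm_real, Real.norm_eq_abs, sq_abs]
  ring

lemma weights (B : Subalgebra ℂ (Mat n)) {σ : Mat n} (hσ : σ.PosSemidef) (hσB : σ ∈ B) {s : ℝ}
    (hs0 : 0 < s) : ∃ w v : Mat n, w ∈ B ∧ v ∈ B ∧ w.PosSemidef ∧ v.PosSemidef ∧ w * v = 1 ∧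
      v * v * v * v = σ + s • 1 ∧
      ∀ ρ : Mat n, ρ.PosSemidef → suppLe ρ σ → hs (w * ρ * w) ≤ Qf ρ σ := by
  obtain ⟨U, l, hU, hU', he, hc, hl, -⟩ := eig_exists hσ.1
  have hl := hl hσ
  have hp : ∀ i, 0 < l i + s := fun i => by linarith [hl i]
  refine ⟨cfc (fun x : ℝ => (x + s) ^ (-1/4 : ℝ)) σ, cfc (fun x : ℝ => (x + s) ^ (1/4 : ℝ)) σ,
    cfc_mem_subalg B hσ.1 hσB _, cfc_mem_subalg B hσ.1 hσB _, ?_, ?_, ?_, ?_, ?_⟩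
  · rw [hc]
    exact conj_diag_psd U (fun i => Real.rpow_nonneg (hp i).le _)
  · rw [hc]
    exact conj_diag_psd U (fun i => Real.rpow_nonneg (hp i).le _)
  · rw [hc, hc, conj_diag_mul hU]
    have : (fun i => (((l i + s) ^ (-1/4 : ℝ) : ℝ) : ℂ) * (((l i + s) ^ (1/4 : ℝ) : ℝ) : ℂ)) = fun i => 1 := by
      ext i
      rw [← Complex.ofReal_mul, ← Real.rpow_add (hp i)]
      norm_num
    rw [this, Matrix.diagonal_one, Matrix.mul_one, hU']
  · rw [hc, conj_diag_mul hU, conj_diag_mul hU, conj_diag_mul hU]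
    have : (fun i => (((l i + s) ^ (1/4 : ℝ) : ℝ) : ℂ) * (((l i + s) ^ (1/4 : ℝ) : ℝ) : ℂ) * (((l i + s) ^ (1/4 : ℝ) : ℝ) : ℂ) * (((l i + s) ^ (1/4 : ℝ) : ℝ) : ℂ)) = fun i => (l i : ℂ) + (s : ℂ) := by
      ext i
      rw [← Complex.ofReal_mul, ← Complex.ofReal_mul, ← Complex.ofReal_mul, ← Real.rpow_add (hp i), ← Real.rpow_add (hp i), ← Real.rpow_add (hp i)]
      norm_num
    rw [this]
    have h2 : diagonal (fun i => (l i : ℂ) + (s : ℂ)) = diagonal (fun i => (l i : ℂ)) + s • (1 : Mat n) := by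
      ext i j
      by_cases hij : i = j <;> simp [hij, Matrix.one_apply]
    rw [h2, Matrix.mul_add, Matrix.add_mul, ← he]
    simp [hU']
  · intro ρ hρ hsup
    have hH : (sandwich 2 ρ σ).IsHermitian := by
      unfold sandwich mpow
      rw [hc]
      have := (conj_diag_isHermitian U (fun i => (l i) ^ ((1 - 2 : ℝ)/(2*2)))).eq
      generalize U * diagonal (fun i => (((l i) ^ ((1 - 2 : ℝ)/(2*2)) : ℝ) : ℂ)) * Uᴴ = Y at this ⊢
      unfold Matrix.IsHermitian
      rw [Matrix.conjTranspose_mul, Matrix.conjTranspose_mul, this, hρ.1.eq, Matrix.mul_assoc]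
    have hz : ∀ j, l j = 0 → ∀ i, (Uᴴ * ρ * U) i j = 0 := by
      intro j hj i
      have h1 : σ.mulVec (U.mulVec (Pi.single j 1)) = 0 := by
        rw [Matrix.mulVec_mulVec, he, Matrix.mul_assoc, hU, Matrix.mul_one, ← Matrix.mulVec_mulVec]
        have : (diagonal (fun i => (l i : ℂ))).mulVec (Pi.single j 1) = 0 := by
          ext a
          rw [Matrix.mulVec_diagonal]
          by_cases ha : a = j
          · subst ha; simp [hj]
          · simp [ha]
        rw [this, Matrix.mulVec_zero]
      have h2 := hsup _ h1
      have h3 : (Uᴴ * ρ * U).mulVec (Pi.single j 1) = 0 := by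
        rw [Matrix.mul_assoc, ← Matrix.mulVec_mulVec, ← Matrix.mulVec_mulVec, h2, Matrix.mulVec_zero]
      have := congrFun h3 i
      simpa using this
    have hz' : ∀ i, l i = 0 → ∀ j, (Uᴴ * ρ * U) i j = 0 := by
      intro i hi j
      have : (Uᴴ * ρ * U)ᴴ = Uᴴ * ρ * U := by
        simp [Matrix.conjTranspose_mul, hρ.1.eq, Matrix.mul_assoc]
      rw [← this, Matrix.conjTranspose_apply, hz i hi j, star_zero]
    rw [Qf, mpow_two hH, sandwich, mpow, hc, hc, hs_conj_diag U hU, hs_conj_diag U hU]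
    refine Finset.sum_le_sum fun i _ => Finset.sum_le_sum fun j _ => ?_
    by_cases hi : l i = 0
    · simp [hz' i hi j]
    by_cases hj : l j = 0
    · simp [hz j hj i]
    have hi' : 0 < l i := lt_of_le_of_ne (hl i) (Ne.symm hi)
    have hj' : 0 < l j := lt_of_le_of_ne (hl j) (Ne.symm hj)
    have e : ((1 - 2 : ℝ)/(2*2)) = -1/4 := by norm_num
    rw [e]
    have hmi : (l i + s) ^ (-1/4 : ℝ) ≤ (l i) ^ (-1/4 : ℝ) :=
      Real.rpow_le_rpow_of_nonpos hi' (by linarith) (by norm_num)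
    have hmj : (l j + s) ^ (-1/4 : ℝ) ≤ (l j) ^ (-1/4 : ℝ) :=
      Real.rpow_le_rpow_of_nonpos hj' (by linarith) (by norm_num)
    have := Real.rpow_nonneg (hp i).le (-1/4 : ℝ)
    have := Real.rpow_nonneg (hp j).le (-1/4 : ℝ)
    gcongr

lemma posDef_of_mul_eq_one {A C : Mat n} (hA : A.PosSemidef) (h : A * C = 1) : A.PosDef := by
  rw [hA.posDef_iff_isUnit]
  exact IsUnit.of_mul_eq_one _ h

lemma core_entropy {B : Subalgebra ℂ (Mat n)} {T E : Mat n →ₗ[ℂ] Mat n} {μ : ℝ} (S : Sys B T E μ)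
    {ω w v : Mat n} (hω : IsDensity ω) (hwB : w ∈ B) (hvB : v ∈ B) (hw : w.PosSemidef)
    (hv : v.PosSemidef) (hwv : w * v = 1) {δ : ℝ} (hδ : 0 < δ)
    (hle : √(hs (w * (ω - E ω) * w)) ≤ δ) :
    ∃ ξ ∈ B, IsDensity ξ ∧ ξ.PosDef ∧
      traceR (ω * mlog ω - ω * mlog ξ) ≤ δ * (1 + traceR (v * v * v * v)) := by
  have hvw : v * w = 1 := mul_eq_one_comm.mp hwv
  have hω1 : traceR ω = 1 := by rw [traceR, hω.2]; rfl
  set a := E ω with ha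
  have haB : a ∈ B := S.E_mem _
  have hap : a.PosSemidef := S.E_psd hω.1
  have ha1 : traceR a = 1 := by rw [traceR, ha, S.E_trace, hω.2]; rfl
  set h := ω - a with hh
  have hhH : hᴴ = h := by rw [hh, Matrix.conjTranspose_sub, hω.1.1.eq, hap.1.eq]
  set τ := v * v * v * v with hτ
  have hτB : τ ∈ B := mul_mem (mul_mem (mul_mem hvB hvB) hvB) hvB
  have hτw : τ * (w * w * w * w) = 1 := by
    calc τ * (w * w * w * w) = v * (v * (v * (v * w) * w) * w) * w := by
          simp only [hτ, Matrix.mul_assoc]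
      _ = 1 := by simp only [hvw, Matrix.mul_one]
  have hτp : τ.PosSemidef := by
    have := Matrix.posSemidef_conjTranspose_mul_self (v * v)
    rw [Matrix.conjTranspose_mul, hv.1.eq, ← Matrix.mul_assoc] at this
    exact this
  have hτd : τ.PosDef := posDef_of_mul_eq_one hτp hτw
  have hwd : w.PosDef := posDef_of_mul_eq_one hw hwv
  set t := traceR τ with ht
  have ht0 : 0 ≤ t := traceR_psd_nonneg hτp
  set X := a + δ • τ with hX
  have hXB : X ∈ B := add_mem haB (B.smul_mem hτB (δ : ℂ))
  have hXd : X.PosDef := (hτd.smul hδ).posSemidef_add hap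
  set z := 1 + δ * t with hz
  have hz0 : 0 < z := by positivity
  have hXt : traceR X = z := by rw [hX, traceR_add, traceR_smul, ha1]
  set ξ := z⁻¹ • X with hξ
  have hξB : ξ ∈ B := B.smul_mem hXB ((z⁻¹ : ℝ) : ℂ)
  have hξd : ξ.PosDef := hXd.smul (inv_pos.mpr hz0)
  have hξ1 : ξ.trace = 1 := by
    have h1 : traceR ξ = 1 := by rw [hξ, traceR_smul, hXt, inv_mul_cancel₀ hz0.ne']
    have h2 : 0 ≤ ξ.trace := hξd.posSemidef.trace_nonneg
    have h3 := Complex.nonneg_iff.mp h2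
    apply Complex.ext
    · exact h1
    · exact h3.2.symm
  refine ⟨ξ, hξB, ⟨hξd.posSemidef, hξ1⟩, hξd, ?_⟩
  have hDU := DU_le hω.1 hξd hz0
  obtain ⟨U, l, hU, hU', he, hc, -, hl⟩ := eig_exists hξd.1
  have hl := hl hξd
  set G := cfc (fun x : ℝ => (√(z * x))⁻¹) ξ with hG
  have hGB : G ∈ B := cfc_mem_subalg B hξd.1 hξB _
  have hGp : G.PosSemidef := by
    rw [hG, hc]; exact conj_diag_psd U (fun i => by positivity)
  have hXe : X = U * diagonal (fun i => ((z * l i : ℝ) : ℂ)) * Uᴴ := by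
    have : X = (z : ℂ) • ξ := by
      ext i j
      have : (z : ℂ) ≠ 0 := by exact_mod_cast hz0.ne'
      simp [hξ, this]
    rw [this, he, ← Matrix.smul_mul, ← Matrix.mul_smul, ← Matrix.diagonal_smul]
    congr 3
    ext i
    simp
  have hGXG : G * X * G = 1 := by
    rw [hG, hc, hXe, conj_diag_mul hU, conj_diag_mul hU]
    have : (fun i => (((√(z * l i))⁻¹ : ℝ) : ℂ) * ((z * l i : ℝ) : ℂ) * (((√(z * l i))⁻¹ : ℝ) : ℂ)) = fun _ => 1 := by
      ext i
      have hp : 0 < z * l i := mul_pos hz0 (hl i)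
      rw [← Complex.ofReal_mul, ← Complex.ofReal_mul]
      norm_cast
      have := Real.mul_self_sqrt hp.le
      have h4 : √(z * l i) ≠ 0 := (Real.sqrt_pos.mpr hp).ne'
      field_simp
      rw [sq, this]
    rw [this, Matrix.diagonal_one, Matrix.mul_one, hU']
  have hXGG : X * (G * G) = 1 := by
    have h1 : X * G * G = 1 := by
      apply mul_eq_one_comm.mp
      rw [← Matrix.mul_assoc]; exact hGXG
    rw [← Matrix.mul_assoc]; exact h1
  -- comparison `G ≤ K`
  set d := (√δ)⁻¹ with hd
  have hd0 : 0 < d := inv_pos.mpr (Real.sqrt_pos.mpr hδ)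
  have hdd : d * d = δ⁻¹ := by rw [hd, ← mul_inv, Real.mul_self_sqrt hδ.le]
  set K := d • (w * w) with hK
  have hwwp : (w * w).PosSemidef := by
    have := Matrix.posSemidef_conjTranspose_mul_self w
    rwa [hw.1.eq] at this
  have hKd : K.PosDef := by
    refine Matrix.PosDef.smul (posDef_of_mul_eq_one (C := v * v) hwwp ?_) hd0
    calc w * w * (v * v) = w * (w * v) * v := by simp only [Matrix.mul_assoc]
      _ = 1 := by rw [hwv, Matrix.mul_one, hwv]
  have hKK : K * K = δ⁻¹ • (w * w * w * w) := by
    rw [hK, Matrix.smul_mul, Matrix.mul_smul, smul_smul, hdd, ← Matrix.mul_assoc]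
  have hKG : (K - G).PosSemidef := by
    apply sq_le_sq_imp hGp hKd
    apply inv_antitone (C := δ • τ) (M := X) (hτp.smul hδ.le)
    · rw [Matrix.conjTranspose_mul, hKd.1.eq]
    · rw [Matrix.conjTranspose_mul, hGp.1.eq]
    · rw [hKK, Matrix.smul_mul, Matrix.mul_smul, smul_smul, hτw, mul_inv_cancel₀ hδ.ne', one_smul]
    · exact hXGG
    · rw [hX]; simpa using hap
  have hhGh : (h * G * h).PosSemidef := by
    have := hGp.conjTranspose_mul_mul_same h
    rwa [hhH] at this
  have hhKh : (h * K * h).PosSemidef := by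
    have := hKd.posSemidef.conjTranspose_mul_mul_same h
    rwa [hhH] at this
  have e1 : traceR (h * G * h * G) ≤ traceR (h * G * h * K) := by
    have := traceR_psd_mul_nonneg hhGh hKG
    rw [Matrix.mul_sub, traceR_sub] at this
    linarith
  have e2 : traceR (h * G * h * K) ≤ traceR (h * K * h * K) := by
    have := traceR_psd_mul_nonneg hhKh hKG
    rw [Matrix.mul_sub, traceR_sub] at this
    have e : traceR (h * G * h * K) = traceR (h * K * h * G) := by
      rw [Matrix.mul_assoc (h * G), traceR_mul_comm, ← Matrix.mul_assoc]
    linarith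
  have e3 : traceR (h * K * h * K) = δ⁻¹ * hs (w * h * w) := by
    rw [← traceR_conj_mul_self]
    have : (w * h * w)ᴴ = w * h * w := by
      simp [Matrix.conjTranspose_mul, hhH, hw.1.eq, Matrix.mul_assoc]
    rw [this, hK]
    simp only [Matrix.smul_mul, Matrix.mul_smul, smul_smul, hdd, traceR_smul]
    congr 1
    rw [← Matrix.mul_assoc, traceR_mul_comm]
    simp only [Matrix.mul_assoc]
  have e4 : δ⁻¹ * hs (w * h * w) ≤ δ := by
    have : hs (w * h * w) ≤ δ ^ 2 := by
      rw [← Real.sq_sqrt (hs_nonneg (w * h * w))]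
      exact pow_le_pow_left₀ (Real.sqrt_nonneg _) hle 2
    rw [inv_mul_le_iff₀ hδ]; linarith
  have e5 : traceR (a * G * a * G) ≤ 1 := by
    have hGτG : (G * τ * G).PosSemidef := by
      have := hτp.conjTranspose_mul_mul_same G
      rwa [hGp.1.eq] at this
    have h1 := traceR_psd_mul_nonneg hGτG hap
    have h2 : traceR (a * G * a * G) = traceR a - δ * traceR (G * τ * G * a) := by
      have : a * G * a * G = a * (G * X * G) - δ • (a * (G * τ * G)) := by
        have : G * a * G = G * X * G - δ • (G * τ * G) := by
          rw [hX, Matrix.mul_add, Matrix.add_mul, Matrix.mul_smul, Matrix.smul_mul]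
          abel
        rw [← Matrix.mul_smul, ← Matrix.mul_sub, ← this]
        simp only [Matrix.mul_assoc]
      rw [this, hGXG, Matrix.mul_one, traceR_sub, traceR_smul, traceR_mul_comm a]
    rw [h2, ha1]
    have := mul_nonneg hδ.le h1
    linarith
  have hor : traceR (G * a * G * h) = 0 := by
    have := S.orth (mul_mem (mul_mem hGB haB) hGB) ω
    rw [traceR, hh, ha, this]; rfl
  have e6 : traceR (a * G * h * G) = 0 := by
    rw [traceR_mul_comm, ← hor]
    simp only [Matrix.mul_assoc]
  have e7 : traceR (h * G * a * G) = 0 := by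
    rw [← hor, traceR_mul_comm (G * a * G) h]
    simp only [Matrix.mul_assoc]
  have e8 : traceR (ω * G * ω * G) = traceR (a * G * a * G) + traceR (a * G * h * G) + traceR (h * G * a * G) + traceR (h * G * h * G) := by
    have : ω = a + h := by rw [hh]; abel
    rw [this]
    simp only [Matrix.add_mul, Matrix.mul_add, traceR_add]
    ring
  have hlog : Real.log z ≤ δ * t := by
    have := Real.log_le_sub_one_of_pos hz0
    rw [hz] at this ⊢
    linarith
  rw [hω1, e8, e6, e7] at hDU
  linarith

lemma core_norm {h w v : Mat n} (hh : hᴴ = h) (hw : w.PosSemidef)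
    (hv : v.PosSemidef) (hwv : w * v = 1) :
    snorm 1 h ≤ √(hs (w * h * w)) * √(traceR (v * v * v * v)) := by
  obtain ⟨S, hS, hSS, e⟩ := snorm_one hh
  rw [e]
  exact traceR_weighted_le hw.1.eq hv.1.eq hwv hh hS hSS

lemma traceR_one : traceR (1 : Mat n) = Fintype.card n := by simp [traceR]

lemma sys_step {B : Subalgebra ℂ (Mat n)} {T E : Mat n →ₗ[ℂ] Mat n} {μ : ℝ} (S : Sys B T E μ)
    {ρ σ : Mat n} (hρ : IsDensity ρ) (hσ : IsDensity σ) (hσB : σ ∈ B) (hsup : suppLe ρ σ)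
    {s : ℝ} (hs0 : 0 < s) :
    ∃ w v : Mat n, w ∈ B ∧ v ∈ B ∧ w.PosSemidef ∧ v.PosSemidef ∧ w * v = 1 ∧
      traceR (v * v * v * v) = 1 + s * Fintype.card n ∧
      √(hs (w * (T ρ - E (T ρ)) * w)) ≤ μ * √(Qf ρ σ) := by
  obtain ⟨w, v, hwB, hvB, hw, hv, hwv, hv4, hQ⟩ := weights B hσ.1 hσB hs0
  refine ⟨T w, T v, S.T_mem _ hwB, S.T_mem _ hvB, S.T_psd _ hw, S.T_psd _ hv, ?_, ?_, ?_⟩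
  · rw [← S.T_mul_left _ hwB, hwv, S.T_one]
  · rw [← S.T_mul_left _ hvB, ← S.T_mul_left _ (mul_mem hvB hvB),
      ← S.T_mul_left _ (mul_mem (mul_mem hvB hvB) hvB), hv4, traceR, S.T_trace]
    change traceR _ = _
    rw [traceR_add, traceR_smul, traceR_one, traceR, hσ.2]
    rfl
  · have e : T w * (T ρ - E (T ρ)) * T w = T (w * ρ * w - E (w * ρ * w)) := by
      rw [S.E_T, ← map_sub, ← S.T_mul_left _ hwB, ← S.T_mul_right _ hwB, S.E_mul_right hwB,
        S.E_mul_left hwB, Matrix.mul_sub, Matrix.sub_mul]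
    rw [e]
    refine (S.contr _).trans ?_
    exact mul_le_mul_of_nonneg_left (Real.sqrt_le_sqrt (hQ ρ hρ.1 hsup)) S.mu_nonneg

lemma one_le_sqrt_Qf {ρ σ : Mat n} (hρ : IsDensity ρ) (hσ : IsDensity σ) (hsup : suppLe ρ σ) :
    1 ≤ √(Qf ρ σ) := by
  have key : ∀ s : ℝ, 0 < s → 1 ≤ √(Qf ρ σ) * √(1 + s * Fintype.card n) := by
    intro s hs0
    obtain ⟨w, v, -, -, hw, hv, hwv, hv4, hQ⟩ := weights ⊤ hσ.1 (by trivial) hs0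
    have h1 := traceR_weighted_le (S := 1) hw.1.eq hv.1.eq hwv hρ.1.1.eq (by simp) (by simp)
    have h2 : traceR (v * v * v * v) = 1 + s * Fintype.card n := by
      rw [hv4, traceR_add, traceR_smul, traceR_one, traceR, hσ.2]
      rfl
    rw [h2, Matrix.mul_one, traceR, hρ.2] at h1
    refine le_trans ?_ (h1.trans (mul_le_mul_of_nonneg_right (Real.sqrt_le_sqrt (hQ ρ hρ.1 hsup)) (Real.sqrt_nonneg _)))
    simp
  have hc : Continuous (fun s : ℝ => √(Qf ρ σ) * √(1 + s * Fintype.card n)) := by fun_prop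
  have ht := (hc.tendsto 0).mono_left (nhdsWithin_le_nhds (s := Set.Ioi (0:ℝ)))
  have := ge_of_tendsto ht (b := (1:ℝ)) (by
    filter_upwards [self_mem_nhdsWithin] with s hs0 using key s hs0)
  simpa using this

lemma step_norm {B : Subalgebra ℂ (Mat n)} {T E : Mat n →ₗ[ℂ] Mat n} {μ : ℝ} (S : Sys B T E μ)
    {ρ σ : Mat n} (hρ : IsDensity ρ) (hσ : IsDensity σ) (hσB : σ ∈ B) (hsup : suppLe ρ σ) :
    snorm 1 (T ρ - T (E ρ)) ≤ μ * √(Qf ρ σ) := by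
  have key : ∀ s : ℝ, 0 < s → snorm 1 (T ρ - T (E ρ)) ≤ μ * √(Qf ρ σ) * √(1 + s * Fintype.card n) := by
    intro s hs0
    obtain ⟨w, v, -, -, hw, hv, hwv, hv4, hQ⟩ := sys_step S hρ hσ hσB hsup hs0
    have hp := S.T_psd _ hρ.1
    have hp2 := S.T_psd _ (S.E_psd hρ.1)
    have := core_norm (h := T ρ - T (E ρ)) (by rw [Matrix.conjTranspose_sub, hp.1.eq, hp2.1.eq]) hw hv hwv
    rw [hv4] at this
    rw [S.E_T] at hQ
    exact this.trans (mul_le_mul_of_nonneg_right hQ (Real.sqrt_nonneg _))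
  have hc : Continuous (fun s : ℝ => μ * √(Qf ρ σ) * √(1 + s * Fintype.card n)) := by fun_prop
  have ht := (hc.tendsto 0).mono_left (nhdsWithin_le_nhds (s := Set.Ioi (0:ℝ)))
  have := ge_of_tendsto ht (b := snorm 1 (T ρ - T (E ρ))) (by
    filter_upwards [self_mem_nhdsWithin] with s hs0 using key s hs0)
  simpa using this

lemma suppLe_posDef {ω ξ : Mat n} (hξ : ξ.PosDef) : suppLe ω ξ := by
  intro v hv
  have : v = 0 := by
    have hi := (Matrix.mulVec_injective_iff_isUnit.mpr hξ.isUnit)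
    apply hi
    simp [hv]
  simp [this]

lemma step_entropy {B : Subalgebra ℂ (Mat n)} {T E : Mat n →ₗ[ℂ] Mat n} {μ : ℝ} (S : Sys B T E μ)
    {ρ σ : Mat n} (hρ : IsDensity ρ) (hσ : IsDensity σ) (hσB : σ ∈ B) (hsup : suppLe ρ σ) :
    DpSet 1 (T ρ) (B : Set (Mat n)) ≤ ((2 * μ * √(Qf ρ σ) : ℝ) : EReal) := by
  have key : ∀ s : ℝ, 0 < s → DpSet 1 (T ρ) (B : Set (Mat n)) ≤
      (((μ * √(Qf ρ σ) + s) * (1 + (1 + s * Fintype.card n)) : ℝ) : EReal) := by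
    intro s hs0
    obtain ⟨w, v, hwB, hvB, hw, hv, hwv, hv4, hQ⟩ := sys_step S hρ hσ hσB hsup hs0
    have hT : IsDensity (T ρ) := ⟨S.T_psd _ hρ.1, by rw [S.T_trace, hρ.2]⟩
    have hδ : 0 < μ * √(Qf ρ σ) + s := by
      have := mul_nonneg S.mu_nonneg (Real.sqrt_nonneg (Qf ρ σ))
      linarith
    obtain ⟨ξ, hξB, hξ, hξd, hle⟩ := core_entropy S hT hwB hvB hw hv hwv hδ (by linarith)
    rw [hv4] at hle
    have h1 : DpSet 1 (T ρ) (B : Set (Mat n)) ≤ Dp 1 (T ρ) ξ := iInf₂_le ξ ⟨hξB, hξ⟩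
    refine h1.trans ?_
    rw [Dp, if_neg (by simp), if_pos rfl, DU, if_pos (suppLe_posDef hξd)]
    exact_mod_cast hle
  have hc : Continuous (fun s : ℝ => (((μ * √(Qf ρ σ) + s) * (1 + (1 + s * Fintype.card n)) : ℝ) : EReal)) := by
    apply continuous_coe_real_ereal.comp
    fun_prop
  have ht := (hc.tendsto 0).mono_left (nhdsWithin_le_nhds (s := Set.Ioi (0:ℝ)))
  have := ge_of_tendsto ht (b := DpSet 1 (T ρ) (B : Set (Mat n))) (by
    filter_upwards [self_mem_nhdsWithin] with s hs0 using key s hs0)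
  refine this.trans_eq ?_
  congr 1
  ring

lemma Dp_two {ρ σ : Mat n} (hρ : IsDensity ρ) (hσ : IsDensity σ) (hsup : suppLe ρ σ) :
    Dp 2 ρ σ = ((Real.log (Qf ρ σ) : ℝ) : EReal) := by
  have h1 := one_le_sqrt_Qf hρ hσ hsup
  have hQ : Qf ρ σ ≠ 0 := by
    intro h
    rw [h] at h1
    norm_num at h1
  have e2 : (2 : ℝ≥0∞).toReal = 2 := by simp
  rw [Dp, if_neg (by simp), if_neg (by norm_num), e2, if_neg (by simp [hsup])]
  unfold Qf at hQ
  rw [if_neg hQ]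
  congr 1
  rw [Qf]
  norm_num

lemma Dp_two_top {ρ σ : Mat n} (hsup : ¬ suppLe ρ σ) : Dp 2 ρ σ = ⊤ := by
  have e2 : (2 : ℝ≥0∞).toReal = 2 := by simp
  rw [Dp, if_neg (by simp), if_neg (by norm_num), e2, if_pos ⟨by norm_num, hsup⟩]

lemma DpSet_two_nonneg {ρ : Mat n} (hρ : IsDensity ρ) (B : Set (Mat n)) : 0 ≤ DpSet 2 ρ B := by
  refine le_iInf₂ fun σ hσ => ?_
  by_cases hsup : suppLe ρ σ
  · rw [Dp_two hρ hσ.2 hsup]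
    have h1 := one_le_sqrt_Qf hρ hσ.2 hsup
    have : 1 ≤ Qf ρ σ := by
      rw [Real.le_sqrt' one_pos] at h1
      linarith
    exact_mod_cast Real.log_nonneg this
  · rw [Dp_two_top hsup]; exact le_top

lemma le_of_Qf {ρ : Mat n} (hρ : IsDensity ρ) {B : Set (Mat n)} (hfin : DpSet 2 ρ B ≠ ⊤)
    {A : EReal} {c : ℝ} (hc : 0 ≤ c)
    (h : ∀ σ ∈ B, IsDensity σ → suppLe ρ σ → A ≤ ((c * √(Qf ρ σ) : ℝ) : EReal)) :
    A ≤ ((c * Real.exp ((DpSet 2 ρ B).toReal / 2) : ℝ) : EReal) := by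
  have hb : DpSet 2 ρ B ≠ ⊥ := by
    intro hb
    have := DpSet_two_nonneg hρ B
    rw [hb] at this
    simp at this
  have key : ∀ r : ℝ, (DpSet 2 ρ B).toReal < r → A ≤ ((c * Real.exp (r / 2) : ℝ) : EReal) := by
    intro r hr
    have h1 : DpSet 2 ρ B < (r : EReal) := by
      rw [← EReal.coe_toReal hfin hb]
      exact_mod_cast hr
    simp only [DpSet, iInf_lt_iff] at h1
    obtain ⟨σ, hσ, hlt⟩ := h1
    by_cases hsup : suppLe ρ σ
    · rw [Dp_two hρ hσ.2 hsup] at hlt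
      have hlt : Real.log (Qf ρ σ) < r := by exact_mod_cast hlt
      have h1 := one_le_sqrt_Qf hρ hσ.2 hsup
      have hQ1 : 1 ≤ Qf ρ σ := by
        rw [Real.le_sqrt' one_pos] at h1
        linarith
      refine (h σ hσ.1 hσ.2 hsup).trans ?_
      have : √(Qf ρ σ) ≤ Real.exp (r / 2) := by
        rw [Real.sqrt_le_left (Real.exp_pos _).le, ← Real.exp_nat_mul]
        have := (Real.log_lt_iff_lt_exp (by linarith)).mp hlt
        refine this.le.trans_eq ?_
        congr 1
        push_cast
        ring
      exact_mod_cast mul_le_mul_of_nonneg_left this hc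
    · rw [Dp_two_top hsup] at hlt
      simp at hlt
  have hcont : Continuous (fun r : ℝ => ((c * Real.exp (r / 2) : ℝ) : EReal)) := by
    apply continuous_coe_real_ereal.comp
    fun_prop
  have ht := (hcont.tendsto (DpSet 2 ρ B).toReal).mono_left
    (nhdsWithin_le_nhds (s := Set.Ioi (DpSet 2 ρ B).toReal))
  exact ge_of_tendsto ht (by
    filter_upwards [self_mem_nhdsWithin] with s hs0 using key s hs0)

lemma Qf_le {ρ σ : Mat n} (hρ : IsDensity ρ) (hσ : σ.PosDef) {c : ℝ}
    (h : (c • σ - ρ).PosSemidef) : Qf ρ σ ≤ c := by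
  obtain ⟨U, l, hU, hU', he, hc, -, hl⟩ := eig_exists hσ.1
  have hl := hl hσ
  set y := mpow σ ((1 - 2 : ℝ)/(2*2)) with hy
  have hye : y = U * diagonal (fun i => (((l i) ^ ((1 - 2 : ℝ)/(2*2)) : ℝ) : ℂ)) * Uᴴ := by
    rw [hy, mpow, hc]
  have hyH : yᴴ = y := by
    rw [hye]; exact (conj_diag_isHermitian U _).eq
  have hH : (y * ρ * y).IsHermitian := by
    unfold Matrix.IsHermitian
    rw [Matrix.conjTranspose_mul, Matrix.conjTranspose_mul, hyH, hρ.1.1.eq, Matrix.mul_assoc]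
  have hone : y * y * σ * (y * y) = 1 := by
    rw [hye, he, conj_diag_mul hU, conj_diag_mul hU, conj_diag_mul hU]
    have : (fun i => (((l i) ^ ((1 - 2 : ℝ)/(2*2)) : ℝ) : ℂ) * (((l i) ^ ((1 - 2 : ℝ)/(2*2)) : ℝ) : ℂ) * (l i : ℂ) * ((((l i) ^ ((1 - 2 : ℝ)/(2*2)) : ℝ) : ℂ) * (((l i) ^ ((1 - 2 : ℝ)/(2*2)) : ℝ) : ℂ))) = fun _ => 1 := by
      ext i
      have h1 : (l i) ^ ((1 - 2 : ℝ)/(2*2)) * (l i) ^ ((1 - 2 : ℝ)/(2*2)) * l i * ((l i) ^ ((1 - 2 : ℝ)/(2*2)) * (l i) ^ ((1 - 2 : ℝ)/(2*2))) = 1 := by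
        have h2 : l i = (l i) ^ (1 : ℝ) := (Real.rpow_one _).symm
        calc _ = (l i) ^ ((1 - 2 : ℝ)/(2*2)) * (l i) ^ ((1 - 2 : ℝ)/(2*2)) * (l i) ^ (1 : ℝ) * ((l i) ^ ((1 - 2 : ℝ)/(2*2)) * (l i) ^ ((1 - 2 : ℝ)/(2*2))) := by rw [Real.rpow_one]
          _ = 1 := by
            rw [← Real.rpow_add (hl i), ← Real.rpow_add (hl i), ← Real.rpow_add (hl i)]
            norm_num
      exact_mod_cast h1
    rw [this, Matrix.diagonal_one, Matrix.mul_one, hU']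
  rw [Qf, sandwich, ← hy, mpow_two hH, ← traceR_conj_mul_self, hH.eq]
  have hp : (y * y * ρ * (y * y)).PosSemidef := by
    have := hρ.1.conjTranspose_mul_mul_same (y * y)
    rwa [Matrix.conjTranspose_mul, hyH] at this
  have h1 := traceR_psd_mul_nonneg hp h
  rw [Matrix.mul_sub, traceR_sub, Matrix.mul_smul, traceR_smul] at h1
  have e1 : traceR (y * y * ρ * (y * y) * σ) = 1 := by
    have : traceR (y * y * ρ * (y * y) * σ) = traceR (y * y * σ * (y * y) * ρ) := by
      rw [Matrix.mul_assoc (y * y * ρ), traceR_mul_comm]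
      simp only [Matrix.mul_assoc]
    rw [this, hone, Matrix.one_mul, traceR, hρ.2]; rfl
  have e2 : traceR (y * ρ * y * (y * ρ * y)) = traceR (y * y * ρ * (y * y) * ρ) := by
    have : traceR (y * ρ * y * (y * ρ * y)) = traceR (y * (ρ * y * (y * ρ * y))) := by
      simp only [Matrix.mul_assoc]
    rw [this, traceR_mul_comm]
    have : traceR (y * y * ρ * (y * y) * ρ) = traceR (y * y * ρ * (y * y * ρ)) := by
      simp only [Matrix.mul_assoc]
    rw [this]
    have : traceR (ρ * y * (y * ρ * y) * y) = traceR (ρ * (y * (y * (ρ * (y * y))))) := by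
      simp only [Matrix.mul_assoc]
    rw [this, traceR_mul_comm]
    simp only [Matrix.mul_assoc]
  rw [e2]
  rw [e1] at h1
  linarith

section cb
variable {k : Type*} [Fintype k] [DecidableEq k]

/-- The projection `1 ⊗ e_s`. -/
def Pj (k : Type*) [Fintype k] [DecidableEq k] (s : n) : Mat (k × n) :=
  diagonal (fun p => if p.2 = s then 1 else 0)

/-- All blocks entries replaced by the `t`-th diagonal entry. -/
def sub2 (X : Mat (k × n)) (t : n) : Mat (k × n) := X.submatrix (fun p => (p.1, t)) (fun p => (p.1, t))

/-- `(id ⊗ Tr)(X) ⊗ 1`. -/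
def ptr (X : Mat (k × n)) : Mat (k × n) :=
  Matrix.of fun p q => if p.2 = q.2 then ∑ t, X (p.1, t) (q.1, t) else 0

lemma Pj_star (s : n) : (Pj k s)ᴴ = Pj k s := by
  unfold Pj
  rw [Matrix.diagonal_conjTranspose]
  congr 1
  ext p
  by_cases h : p.2 = s <;> simp [h]

lemma Pj_sum : ∑ s : n, Pj k s = 1 := by
  ext p q
  by_cases h : p = q
  · subst h
    simp [Pj, Matrix.sum_apply]
  · simp [Pj, Matrix.sum_apply, h]

lemma Pj_conj (s : n) (X : Mat (k × n)) (p q : k × n) :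
    (Pj k s * X * Pj k s) p q = if p.2 = s then if q.2 = s then X p q else 0 else 0 := by
  rw [Pj, Matrix.mul_diagonal, Matrix.diagonal_mul]
  by_cases h : p.2 = s <;> by_cases h' : q.2 = s <;> simp [h, h']

lemma ptr_eq (X : Mat (k × n)) : ptr X = ∑ s, ∑ t, Pj k s * sub2 X t * Pj k s := by
  ext p q
  simp only [Matrix.sum_apply, Pj_conj, ptr, Matrix.of_apply, sub2, Matrix.submatrix_apply]
  rw [Finset.sum_comm]
  by_cases h : p.2 = q.2
  · simp [h]
  · simp [h, Ne.symm h]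

lemma Pj_conj_psd {X : Mat (k × n)} (hX : X.PosSemidef) (s : n) :
    (Pj k s * X * Pj k s).PosSemidef := by
  have := hX.conjTranspose_mul_mul_same (Pj k s)
  rwa [Pj_star] at this

lemma ptr_psd {X : Mat (k × n)} (hX : X.PosSemidef) : (ptr X).PosSemidef := by
  rw [ptr_eq]
  refine Matrix.posSemidef_sum _ fun s _ => Matrix.posSemidef_sum _ fun t _ => ?_
  exact Pj_conj_psd (hX.submatrix _) s

lemma ptr_sub_pinch {X : Mat (k × n)} (hX : X.PosSemidef) :
    (ptr X - ∑ s, Pj k s * X * Pj k s).PosSemidef := by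
  have : ptr X - ∑ s, Pj k s * X * Pj k s = 
      ∑ s, ∑ t ∈ Finset.univ.erase s, Pj k s * sub2 X t * Pj k s := by
    rw [ptr_eq, ← Finset.sum_sub_distrib]
    refine Finset.sum_congr rfl fun s _ => ?_
    rw [← Finset.add_sum_erase _ _ (Finset.mem_univ s)]
    have : Pj k s * sub2 X s * Pj k s = Pj k s * X * Pj k s := by
      ext p q
      rw [Pj_conj, Pj_conj]
      split_ifs with h1 h2
      · rw [sub2, Matrix.submatrix_apply]
        congr 1 <;> ext <;> simp [h1, h2]
      · rfl
      · rfl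
    rw [this]
    abel
  rw [this]
  refine Matrix.posSemidef_sum _ fun s _ => Matrix.posSemidef_sum _ fun t _ => ?_
  exact Pj_conj_psd (hX.submatrix _) s

lemma pinch_ineq {X : Mat (k × n)} (hX : X.PosSemidef) :
    ((Fintype.card n : ℝ) • (∑ s, Pj k s * X * Pj k s) - X).PosSemidef := by
  have h : (∑ s : n, ∑ t : n, (Pj k s - Pj k t) * X * (Pj k s - Pj k t)).PosSemidef := by
    refine Matrix.posSemidef_sum _ fun s _ => Matrix.posSemidef_sum _ fun t _ => ?_
    have := hX.conjTranspose_mul_mul_same (Pj k s - Pj k t)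
    rwa [Matrix.conjTranspose_sub, Pj_star, Pj_star] at this
  have e : ∑ s : n, ∑ t : n, (Pj k s - Pj k t) * X * (Pj k s - Pj k t) =
     (2:ℝ) • ((Fintype.card n : ℝ) • (∑ s, Pj k s * X * Pj k s) - X) := by
    simp only [Matrix.sub_mul, Matrix.mul_sub, Finset.sum_sub_distrib]
    have e1 : ∑ s : n, ∑ t : n, Pj k t * X * Pj k s = X := by
      simp only [← Finset.sum_mul, Pj_sum, ← Finset.mul_sum, Matrix.one_mul, Matrix.mul_one]
    have e2 : ∑ s : n, ∑ t : n, Pj k s * X * Pj k t = X := by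
      simp only [← Finset.sum_mul, Pj_sum, ← Finset.mul_sum, Matrix.one_mul, Matrix.mul_one]
    rw [e1, e2]
    simp only [Finset.sum_const, Finset.card_univ, ← Finset.smul_sum]
    rw [← Nat.cast_smul_eq_nsmul ℝ]
    module
  rw [e] at h
  have := h.smul (show (0:ℝ) ≤ 1/2 by norm_num)
  rw [smul_smul] at this
  norm_num at this
  exact this

lemma ptr_ineq {X : Mat (k × n)} (hX : X.PosSemidef) :
    ((Fintype.card n : ℝ) • ptr X - X).PosSemidef := by
  have h1 := ((ptr_sub_pinch hX).smul (show (0:ℝ) ≤ Fintype.card n by positivity)).add (pinch_ineq hX)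
  convert h1 using 1
  module

lemma ptr_trace (X : Mat (k × n)) : (ptr X).trace = Fintype.card n * X.trace := by
  simp [Matrix.trace, ptr, Fintype.sum_prod_type, Finset.mul_sum]

lemma ptr_mem (B : Subalgebra ℂ (Mat n)) (X : Mat (k × n)) : ptr X ∈ ampAlg k B := by
  intro i j
  have : blk (ptr X) i j = (∑ t, X (i, t) (j, t)) • (1 : Mat n) := by
    ext s t
    by_cases h : s = t <;> simp [blk, ptr, h]
  rw [this]
  exact B.smul_mem (one_mem _) _

lemma DpSet_le_card (B : Subalgebra ℂ (Mat n)) {ρ : Mat (k × n)} (hρ : IsDensity ρ) :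
    DpSet 2 ρ (ampAlg k B : Set (Mat (k × n))) ≤ ((Real.log (2 * (Fintype.card n : ℝ) ^ 2) : ℝ) : EReal) := by
  have hne : Nonempty (k × n) := by
    by_contra hne
    rw [not_nonempty_iff] at hne
    have := hρ.2
    simp [Matrix.trace] at this
  have hk : Nonempty k := ⟨hne.some.1⟩
  have hn : Nonempty n := ⟨hne.some.2⟩
  set a : ℝ := (Fintype.card k : ℝ) with ha
  set b : ℝ := (Fintype.card n : ℝ) with hb
  have ha0 : 0 < a := by rw [ha]; exact_mod_cast Fintype.card_pos
  have hb0 : 0 < b := by rw [hb]; exact_mod_cast Fintype.card_pos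
  let σ : Mat (k × n) := (1 / (2 * b)) • ptr ρ + (1 / (2 * a * b)) • 1
  have hσB : σ ∈ ampAlg k B := add_mem ((ampAlg k B).smul_mem (ptr_mem B ρ) ((1 / (2 * b) : ℝ) : ℂ))
    ((ampAlg k B).smul_mem (one_mem _) ((1 / (2 * a * b) : ℝ) : ℂ))
  have hσd : σ.PosDef := 
    (Matrix.PosDef.one.smul (show 0 < 1 / (2 * a * b) by positivity)).posSemidef_add
      ((ptr_psd hρ.1).smul (show 0 ≤ 1 / (2 * b) by positivity))
  have hσt : σ.trace = 1 := by
    have h1 : (b : ℂ) ≠ 0 := by exact_mod_cast hb0.ne'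
    have h2 : (a : ℂ) ≠ 0 := by exact_mod_cast ha0.ne'
    have e1 : ((Fintype.card n : ℕ) : ℂ) = (b : ℂ) := by rw [hb]; simp
    have e2 : ((Fintype.card k : ℕ) : ℂ) = (a : ℂ) := by rw [ha]; simp
    simp only [σ, Matrix.trace_add, Matrix.trace_smul, ptr_trace, hρ.2, Matrix.trace_one, Fintype.card_prod,
      Nat.cast_mul, e1, e2, Complex.real_smul]
    push_cast
    field_simp
    norm_num
  have hσ : IsDensity σ := ⟨hσd.posSemidef, hσt⟩
  have hle : ((2 * b ^ 2) • σ - ρ).PosSemidef := by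
    have h1 := (ptr_ineq hρ.1).add (Matrix.PosSemidef.one.smul (show (0:ℝ) ≤ b / a by positivity))
    convert h1 using 1
    have e1 : (2 * b ^ 2) * (1 / (2 * b)) = b := by field_simp
    have e2 : (2 * b ^ 2) * (1 / (2 * a * b)) = b / a := by field_simp
    simp only [σ, smul_add, smul_smul, e1, e2]
    abel
  have hQ := Qf_le hρ hσd hle
  have hsup : suppLe ρ σ := suppLe_posDef hσd
  have h1 : DpSet 2 ρ (ampAlg k B : Set (Mat (k × n))) ≤ Dp 2 ρ σ := iInf₂_le σ ⟨hσB, hσ⟩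
  refine h1.trans ?_
  rw [Dp_two hρ hσ hsup]
  have h2 := one_le_sqrt_Qf hρ hσ hsup
  have hQ1 : 1 ≤ Qf ρ σ := by
    rw [Real.le_sqrt' one_pos] at h2
    linarith
  exact_mod_cast Real.log_le_log (by linarith) hQ
end cb

lemma DpCb_ne_top (B : Subalgebra ℂ (Mat n)) : DpCb 2 (B : Set (Mat n)) ≠ ⊤ := by
  have : DpCb 2 (B : Set (Mat n)) ≤ ((Real.log (2 * (Fintype.card n : ℝ) ^ 2) : ℝ) : EReal) := by
    refine iSup_le fun k => iSup₂_le fun ρ hρ => ?_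
    rw [← coe_ampAlg]
    exact DpSet_le_card B hρ.2
  intro h
  rw [h] at this
  simp at this

lemma DpSet_le_DpCb (B : Subalgebra ℂ (Mat n)) (k : ℕ) {ρ : Mat (Fin k × n)} (hρ : IsDensity ρ) :
    DpSet 2 ρ (ampAlg (Fin k) B : Set (Mat (Fin k × n))) ≤ DpCb 2 (B : Set (Mat n)) := by
  rw [coe_ampAlg]
  refine le_trans ?_ (le_iSup _ k)
  exact le_iSup₂ (f := fun (ρ : Mat (Fin k × n)) (_ : ρ ∈ {ρ ∈ (Set.univ : Set (Mat (Fin k × n))) | IsDensity ρ}) =>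
    DpSet 2 ρ (tensorSpan (Set.univ : Set (Mat (Fin k))) (B : Set (Mat n)))) ρ ⟨Set.mem_univ _, hρ⟩

lemma scalar_final {μ ε D C : ℝ} {k : ℕ} (hk : 1 ≤ k) (hμ0 : 0 ≤ μ) (hμ : μ < 1) (hε : 0 < ε) (hε4 : ε ≤ 4)
    (hDC : D ≤ C) (h : (Real.log (1/μ))⁻¹ * (Real.log (4/ε^2) + C / 2) ≤ (k : ℝ)) :
    μ ^ k * Real.exp (D / 2) ≤ ε := by
  rcases hμ0.eq_or_lt with h0 | h0
  · rw [← h0, zero_pow (by omega), zero_mul]; exact hε.le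
  have hl : 0 < Real.log (1/μ) := Real.log_pos (by rw [lt_div_iff₀ h0]; linarith)
  rw [inv_mul_le_iff₀ hl] at h
  have e : Real.log (1/μ) = - Real.log μ := by rw [one_div, Real.log_inv]
  have e2 : μ ^ k = Real.exp (k * Real.log μ) := by
    rw [Real.exp_nat_mul, Real.exp_log h0]
  have e3 : Real.exp (-Real.log (4/ε^2)) = ε^2/4 := by
    rw [← Real.log_inv, Real.exp_log (by positivity), inv_div]
  rw [e2, ← Real.exp_add]
  calc Real.exp (k * Real.log μ + D / 2) ≤ Real.exp (-Real.log (4/ε^2)) := by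
        apply Real.exp_le_exp.mpr
        rw [e] at h
        linarith
    _ = ε^2/4 := e3
    _ ≤ ε := by nlinarith

/-- discrete-time decoherence.  Let `T` be a unital completely
positive map on `M_m`, self-adjoint with respect to `Tr`, `N` its
multiplicative domain, `E` the trace preserving conditional expectation onto
`N`, and `μ = ‖T∘(I-E)‖_{2→2} < 1`.  Then for every `n ≥ 1`, every density
`ρ ∈ M_n ⊗ M_m` and every `k ≥ 1`,
`D((id ⊗ T)^k(ρ)‖M_n ⊗ N) ≤ 2 μ^k exp(D₂(ρ‖M_n ⊗ N)/2)`; moreover if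
`k ≥ (log(1/μ))⁻¹ (log(4/ε²) + D_{2,cb}(M_m‖N)/2)` then
`‖(id ⊗ T)^k(ρ) - (id ⊗ E)(ρ)‖₁ ≤ ε` for `k` even, and
`‖(id ⊗ T)^k(ρ) - (id ⊗ (T∘E))(ρ)‖₁ ≤ ε` for `k` odd. -/
theorem statement18 {m : ℕ} (T : Mat (Fin m) →ₗ[ℂ] Mat (Fin m))
    (hT1 : T 1 = 1) (hTcp : IsCP T)
    (hTsa : ∀ x y : Mat (Fin m), (xᴴ * T y).trace = ((T x)ᴴ * y).trace)
    (E : Mat (Fin m) →ₗ[ℂ] Mat (Fin m)) (hE : IsCondExp (multDomain T) E)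
    (μ : ℝ) (hμdef : μ = norm22 (T ∘ₗ (LinearMap.id - E))) (hμ : μ < 1) :
    ∀ (n : ℕ), 1 ≤ n → ∀ ρ : Mat (Fin n × Fin m), IsDensity ρ →
      ∀ k : ℕ, 1 ≤ k →
        (DpSet 1 ((ampFun (Fin n) T)^[k] ρ)
            (tensorSpan (Set.univ : Set (Mat (Fin n))) (multDomain T)) ≤
          ((2 * μ ^ k *
            Real.exp ((DpSet 2 ρ
              (tensorSpan (Set.univ : Set (Mat (Fin n))) (multDomain T))).toReal / 2)
            : ℝ) : EReal)) ∧
        ∀ ε : ℝ, 0 < ε →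
          (Real.log (1/μ))⁻¹ * (Real.log (4/ε^2) + (DpCb 2 (multDomain T)).toReal / 2)
              ≤ (k : ℝ) →
            (Even k →
              snorm 1 ((ampFun (Fin n) T)^[k] ρ - ampFun (Fin n) E ρ) ≤ ε) ∧
            (Odd k →
              snorm 1 ((ampFun (Fin n) T)^[k] ρ - ampFun (Fin n) (T ∘ₗ E) ρ) ≤ ε) := by
  intro n _ ρ hρ k hk
  have S0 := baseSys T hT1 hTcp hTsa E hE μ hμdef
  rw [← coe_mdAlg hTcp hT1]
  set B := mdAlg T hT1 with hB
  have S1 : Sys (ampAlg (Fin n) B) (ampLin (Fin n) T) (ampLin (Fin n) E) μ := ampSys S0 (hTcp n)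
  obtain ⟨j, rfl⟩ : ∃ j, k = j + 1 := ⟨k - 1, by omega⟩
  have S := S1.pow j
  have hit : ∀ x, (ampFun (Fin n) T)^[j + 1] x = (ampLin (Fin n) T ^ (j + 1)) x := by
    intro x
    rw [Module.End.pow_apply]
    rfl
  rw [hit, ← coe_ampAlg]
  have hfin : DpSet 2 ρ (ampAlg (Fin n) B : Set (Mat (Fin n × Fin m))) ≠ ⊤ := by
    intro h
    have := DpSet_le_card B hρ
    rw [h] at this
    simp at this
  have hbot : DpSet 2 ρ (ampAlg (Fin n) B : Set (Mat (Fin n × Fin m))) ≠ ⊥ := by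
    intro h
    have := DpSet_two_nonneg hρ (ampAlg (Fin n) B : Set (Mat (Fin n × Fin m)))
    rw [h] at this
    simp at this
  refine ⟨?_, ?_⟩
  · exact le_of_Qf hρ hfin (mul_nonneg zero_le_two S.mu_nonneg)
      fun σ hσB hσ hsup => step_entropy S hρ hσ hσB hsup
  · intro ε hε hle
    have hDC := EReal.toReal_le_toReal (DpSet_le_DpCb B n hρ) hbot (DpCb_ne_top B)
    have main : snorm 1 ((ampLin (Fin n) T ^ (j + 1)) ρ -
        (ampLin (Fin n) T ^ (j + 1)) (ampLin (Fin n) E ρ)) ≤ ε := by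
      rcases le_total ε 4 with h4 | h4
      · have h1 := le_of_Qf (A := ((snorm 1 ((ampLin (Fin n) T ^ (j + 1)) ρ -
          (ampLin (Fin n) T ^ (j + 1)) (ampLin (Fin n) E ρ)) : ℝ) : EReal)) hρ hfin S.mu_nonneg
          fun σ hσB hσ hsup => by exact_mod_cast step_norm S hρ hσ hσB hsup
        have h2 := EReal.coe_le_coe_iff.mp h1
        exact h2.trans (scalar_final hk S0.mu_nonneg hμ hε h4 hDC hle)
      · have h1 := snorm_one_le_add (S.T_psd _ hρ.1) (S.T_psd _ (S.E_psd hρ.1))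
        have e1 : traceR ((ampLin (Fin n) T ^ (j + 1)) ρ) = 1 := by
          rw [traceR, S.T_trace, hρ.2]; rfl
        have e2 : traceR ((ampLin (Fin n) T ^ (j + 1)) (ampLin (Fin n) E ρ)) = 1 := by
          rw [traceR, S.T_trace, S.E_trace, hρ.2]; rfl
        rw [e1, e2] at h1
        linarith
    have hEB := S.E_mem ρ
    have hpow : ∀ (b : Mat (Fin n × Fin m)), b ∈ ampAlg (Fin n) B → ∀ i : ℕ,
        (ampLin (Fin n) T ^ (2 * i)) b = b := by
      intro b hb i
      induction i with
      | zero => rfl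
      | succ i ih =>
        rw [show 2 * (i + 1) = 2 * i + 1 + 1 by ring, pow_succ, pow_succ]
        change (ampLin (Fin n) T ^ (2 * i)) (ampLin (Fin n) T (ampLin (Fin n) T b)) = b
        rw [S1.T_T b hb, ih]
    refine ⟨fun hev => ?_, fun hodd => ?_⟩
    · obtain ⟨i, hi⟩ := hev
      have : (ampLin (Fin n) T ^ (j + 1)) (ampLin (Fin n) E ρ) = ampFun (Fin n) E ρ := by
        rw [hi, ← two_mul, hpow _ hEB]
        rfl
      rwa [this] at main
    · obtain ⟨i, hi⟩ := hodd
      have : (ampLin (Fin n) T ^ (j + 1)) (ampLin (Fin n) E ρ) = ampFun (Fin n) (T ∘ₗ E) ρ := by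
        rw [hi, pow_succ']
        change ampLin (Fin n) T ((ampLin (Fin n) T ^ (2 * i)) (ampLin (Fin n) E ρ)) = _
        rw [hpow _ hEB]
        rfl
      rwa [this] at main

end GJL
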